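/- arXiv:math/0210139 — 11 statements merged into one kernel-verified Lean document; each statement's English description precedes it below -/
import Mathlib

section
/- Let A be a unital complex *-algebra, q a nonzero real number, and x₀, x₁, …, x_n ∈ A with x₀ = x₀* elements satisfying the commutation relations (i) x_i x_j = q x_j x_i for 0 ≤ i < j ≤ n, (ii) x_i* x_j = q x_j x_i* for i ≠ j, and (iii) x_i x_i* − x_i* x_i = (1 − q⁻²) s_{i−1} for i = 1, …, n, where s₀ := x₀² and s_i := s_{i−1} + x_i* x_i. Then for all 0 ≤ i ≤ n and 0 ≤ j ≤ n: s_i x_j = q² x_j s_i and s_i x_j* = q⁻² x_j* s_i whenever i < j, while s_i x_j = x_j s_i and s_i x_j* = x_j* s_i whenever i ≥ j. In particular s_n commutes with every generator x_j and x_j*, i.e. the radius element is central in the algebra generated by x₀, …, x_n. -/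
/-- Partial radii for the quantum Euclidean space/even sphere:
`s 0 = x₀ * x₀` and `s (i+1) = s i + (x (i+1))* * x (i+1)`. -/
def sEven {A : Type*} [Ring A] [StarRing A] (x : ℕ → A) : ℕ → A
  | 0 => x 0 * x 0
  | i + 1 => sEven x i + star (x (i + 1)) * x (i + 1)

theorem sEven_star_aux {A : Type*} [Ring A] [StarRing A] (x : ℕ → A)
    (hx0 : star (x 0) = x 0) (i : ℕ) : star (sEven x i) = sEven x i := by
  induction i with
  | zero => simp [sEven, hx0]
  | succ i ih => simp [sEven, ih]

/-- In a unital complex *-algebra, if `x₀ = x₀*, x₁, …, xₙ` satisfy the quantum Euclidean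
space relations, then `sᵢ xⱼ = q² xⱼ sᵢ` and `sᵢ xⱼ* = q⁻² xⱼ* sᵢ` for `i < j`, while `sᵢ`
commutes with `xⱼ` and `xⱼ*` for `i ≥ j`; in particular the radius `sₙ` is central in the
algebra generated by the `xᵢ`'s. -/
theorem sEven_commutation {A : Type*} [Ring A] [Algebra ℂ A] [StarRing A] [StarModule ℂ A]
    (q : ℝ) (hq : q ≠ 0) (n : ℕ) (hn : 1 ≤ n) (x : ℕ → A)
    (hx0 : star (x 0) = x 0)
    (hrel1 : ∀ i j : ℕ, i < j → j ≤ n → x i * x j = (q : ℂ) • (x j * x i))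
    (hrel2 : ∀ i j : ℕ, i ≤ n → j ≤ n → i ≠ j →
      star (x i) * x j = (q : ℂ) • (x j * star (x i)))
    (hrel3 : ∀ i : ℕ, 1 ≤ i → i ≤ n →
      x i * star (x i) - star (x i) * x i = (1 - ((q : ℂ) ^ 2)⁻¹) • sEven x (i - 1)) :
    (∀ i j : ℕ, i ≤ n → j ≤ n → i < j →
      sEven x i * x j = ((q : ℂ) ^ 2) • (x j * sEven x i) ∧
      sEven x i * star (x j) = ((q : ℂ) ^ 2)⁻¹ • (star (x j) * sEven x i)) ∧
    (∀ i j : ℕ, i ≤ n → j ≤ n → j ≤ i →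
      sEven x i * x j = x j * sEven x i ∧
      sEven x i * star (x j) = star (x j) * sEven x i) ∧
    (∀ j : ℕ, j ≤ n →
      sEven x n * x j = x j * sEven x n ∧
      sEven x n * star (x j) = star (x j) * sEven x n) := by
  have hqc : (q : ℂ) ≠ 0 := by exact_mod_cast hq
  have hs := sEven_star_aux x hx0
  have hsq : star ((q : ℂ) ^ 2) = (q : ℂ) ^ 2 := by simp
  have A1 : ∀ j : ℕ, j ≤ n → ∀ i : ℕ, i < j →
      sEven x i * x j = ((q : ℂ) ^ 2) • (x j * sEven x i) := by
    intro j hj i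
    induction i with
    | zero =>
      intro hij
      simp only [sEven]
      rw [mul_assoc, hrel1 0 j hij hj, mul_smul_comm, ← mul_assoc, hrel1 0 j hij hj,
        smul_mul_assoc, smul_smul, ← sq, mul_assoc]
    | succ i ih =>
      intro hij
      simp only [sEven]
      rw [add_mul, mul_add, smul_add, ih (by omega), mul_assoc, hrel1 (i+1) j hij hj,
        mul_smul_comm, ← mul_assoc, hrel2 (i+1) j (by omega) hj (by omega),
        smul_mul_assoc, smul_smul, ← sq, mul_assoc]
  have B1 : ∀ j : ℕ, j ≤ n → ∀ i : ℕ, i ≤ n → j ≤ i →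
      sEven x i * x j = x j * sEven x i := by
    intro j hj i
    induction i with
    | zero =>
      intro _ hji
      obtain rfl : j = 0 := by omega
      simp only [sEven, mul_assoc]
    | succ i ih =>
      intro hi hji
      rcases Nat.lt_or_ge j (i+1) with h | h
      · have e1 : x (i+1) * x j = (q : ℂ)⁻¹ • (x j * x (i+1)) := by
          rw [hrel1 j (i+1) h hi, smul_smul, inv_mul_cancel₀ hqc, one_smul]
        simp only [sEven]
        rw [add_mul, mul_add, ih (by omega) (by omega), mul_assoc, e1,
          mul_smul_comm, ← mul_assoc, hrel2 (i+1) j hi hj (by omega),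
          smul_mul_assoc, smul_smul, inv_mul_cancel₀ hqc, one_smul, mul_assoc]
      · obtain rfl : j = i + 1 := by omega
        have h3 := hrel3 (i+1) (by omega) hi
        simp only [Nat.add_sub_cancel] at h3
        have h4 : star (x (i+1)) * x (i+1) = x (i+1) * star (x (i+1))
            - (1 - ((q : ℂ) ^ 2)⁻¹) • sEven x i := by rw [← h3]; abel
        have e : (1 - ((q : ℂ) ^ 2)⁻¹) * (q : ℂ)^2 = (q : ℂ)^2 - 1 := by field_simp
        simp only [sEven]
        rw [add_mul, mul_add]
        conv_lhs => rw [h4]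
        rw [sub_mul, smul_mul_assoc, A1 (i+1) hj i (by omega), smul_smul, e, sub_smul,
          one_smul, mul_assoc]
        abel
  have B2 : ∀ i j : ℕ, i ≤ n → j ≤ n → j ≤ i →
      sEven x i * x j = x j * sEven x i ∧
      sEven x i * star (x j) = star (x j) * sEven x i := by
    intro i j hi hj hji
    refine ⟨B1 j hj i hi hji, ?_⟩
    have := congrArg star (B1 j hj i hi hji)
    rw [star_mul, star_mul, hs] at this
    exact this.symm
  refine ⟨?_, B2, fun j hj => B2 n j le_rfl hj hj⟩
  intro i j hi hj hij
  refine ⟨A1 j hj i hij, ?_⟩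
  have := congrArg star (A1 j hj i hij)
  rw [star_smul, star_mul, star_mul, hs, hsq] at this
  rw [this, smul_smul, inv_mul_cancel₀ (pow_ne_zero 2 hqc), one_smul]
end

section
/- Let A be a unital complex *-algebra, q a nonzero real number, and x₀, x₁, …, x_n ∈ A with x₀ = x₀* elements satisfying the relations x_i x_j = q x_j x_i (0 ≤ i < j ≤ n), x_i* x_j = q x_j x_i* (i ≠ j), and x_i x_i* − x_i* x_i = (1 − q⁻²) s_{i−1} (1 ≤ i ≤ n), where s₀ := x₀² and s_i := s_{i−1} + x_i* x_i. Then the elements s₀, s₁, …, s_n are mutually commuting: s_i s_j = s_j s_i for all 0 ≤ i, j ≤ n. -/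
/-- In a unital complex *-algebra, if `x₀ = x₀*, x₁, …, xₙ` satisfy the quantum Euclidean
space relations, then the partial radii `s₀, s₁, …, sₙ` are mutually commuting. -/
theorem sEven_mutually_commuting {A : Type*} [Ring A] [Algebra ℂ A] [StarRing A] [StarModule ℂ A]
    (q : ℝ) (hq : q ≠ 0) (n : ℕ) (hn : 1 ≤ n) (x : ℕ → A)
    (hx0 : star (x 0) = x 0)
    (hrel1 : ∀ i j : ℕ, i < j → j ≤ n → x i * x j = (q : ℂ) • (x j * x i))
    (hrel2 : ∀ i j : ℕ, i ≤ n → j ≤ n → i ≠ j →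
      star (x i) * x j = (q : ℂ) • (x j * star (x i)))
    (hrel3 : ∀ i : ℕ, 1 ≤ i → i ≤ n →
      x i * star (x i) - star (x i) * x i = (1 - ((q : ℂ) ^ 2)⁻¹) • sEven x (i - 1)) :
    ∀ i j : ℕ, i ≤ n → j ≤ n → sEven x i * sEven x j = sEven x j * sEven x i := by
  have key : ∀ i k : ℕ, i < k → k ≤ n → Commute (x i) (star (x k) * x k) := by
    intro i k hik hk
    have h1 := hrel1 i k hik hk
    have h2 := hrel2 k i hk (by omega) (by omega)
    have hq' : (q : ℂ) ≠ 0 := by exact_mod_cast hq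
    have h3 : (q : ℂ) • (x i * (star (x k) * x k)) = (q : ℂ) • (star (x k) * x k * x i) := by
      calc (q : ℂ) • (x i * (star (x k) * x k)) = ((q : ℂ) • (x i * star (x k))) * x k := by
            rw [smul_mul_assoc, mul_assoc]
        _ = star (x k) * (x i * x k) := by rw [← h2, mul_assoc]
        _ = _ := by rw [h1, mul_smul_comm, mul_assoc]
    have h4 := congrArg (fun a => (q : ℂ)⁻¹ • a) h3
    simp only [inv_smul_smul₀ hq'] at h4
    exact h4
  have keyS : ∀ i k : ℕ, i < k → k ≤ n → Commute (star (x i)) (star (x k) * x k) := by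
    intro i k hik hk
    have h := congrArg star (key i k hik hk).eq
    simp only [star_mul, star_star] at h
    exact h.symm
  have keys : ∀ i k : ℕ, i < k → k ≤ n → Commute (sEven x i) (star (x k) * x k) := by
    intro i
    induction i with
    | zero =>
      intro k hik hk
      exact (key 0 k hik hk).mul_left (key 0 k hik hk)
    | succ i ih =>
      intro k hik hk
      exact (ih k (by omega) hk).add_left ((keyS _ k hik hk).mul_left (key _ k hik hk))
  have main : ∀ i d : ℕ, i + d ≤ n → Commute (sEven x i) (sEven x (i + d)) := by
    intro i d
    induction d with
    | zero => intro _; exact Commute.refl _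
    | succ d ih =>
      intro h
      exact (ih (by omega)).add_right (keys i (i + d + 1) (by omega) h)
  intro i j hi hj
  rcases le_total i j with h | h
  · obtain ⟨d, rfl⟩ := Nat.exists_eq_add_of_le h
    exact (main i d hj).eq
  · obtain ⟨d, rfl⟩ := Nat.exists_eq_add_of_le h
    exact (main j d hi).eq.symm
end

section
/- Let A be a unital complex *-algebra, q a nonzero real number, and x₀, x₁, …, x_n ∈ A with x₀ = x₀*. Define recursively the 2^k × 2^k matrices u_{(2k)} over A by u_{(0)} = x₀ and u_{(2k)} = [[q⁻¹ u_{(2k−2)}, x_k·1], [x_k*·1, −u_{(2k−2)}]] in block form (x_k·1 denoting x_k times the 2^{k−1} × 2^{k−1} identity matrix). Then u_{(2n)}² = 1 (the 2^n × 2^n identity matrix) if and only if the S^{2n}_q relations hold, namely: x_i x_j = q x_j x_i for 0 ≤ i < j ≤ n; x_i* x_j = q x_j x_i* for i ≠ j; x_i x_i* − x_i* x_i = (1 − q⁻²) s_{i−1} for i = 1, …, n; and s_n = 1, where s₀ := x₀² and s_i := s_{i−1} + x_i* x_i. -/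
/-- The recursively defined matrices `u_{(2k)}`:  `u_{(0)} = x₀` and
`u_{(2k)} = [[q⁻¹ u_{(2k-2)}, x_k · 1], [x_k* · 1, -u_{(2k-2)}]]`, as `2^k × 2^k`
matrices over `A`. -/
noncomputable def uMat {A : Type*} [Ring A] [Algebra ℂ A] [StarRing A] (q : ℝ) (x : ℕ → A) :
    (k : ℕ) → Matrix (Fin (2 ^ k)) (Fin (2 ^ k)) A
  | 0 => Matrix.of fun _ _ => x 0
  | k + 1 =>
    Matrix.reindex (finSumFinEquiv.trans (finCongr (by rw [pow_succ, mul_two])))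
      (finSumFinEquiv.trans (finCongr (by rw [pow_succ, mul_two])))
      (Matrix.fromBlocks ((q : ℂ)⁻¹ • uMat q x k)
        (x (k + 1) • (1 : Matrix (Fin (2 ^ k)) (Fin (2 ^ k)) A))
        (star (x (k + 1)) • (1 : Matrix (Fin (2 ^ k)) (Fin (2 ^ k)) A))
        (-uMat q x k))

def qcomm {A : Type*} [Ring A] [Algebra ℂ A] (q : ℝ) (y : A) : Submodule ℂ A where
  carrier := {a | a * y = (q : ℂ) • (y * a)}
  zero_mem' := by simp
  add_mem' := by
    intro a b ha hb
    simp only [Set.mem_ofPred_eq] at *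
    rw [add_mul, mul_add, smul_add, ha, hb]
  smul_mem' := by
    intro c a ha
    simp only [Set.mem_ofPred_eq] at *
    rw [smul_mul_assoc, ha, mul_smul_comm, smul_comm]

theorem mem_qcomm {A : Type*} [Ring A] [Algebra ℂ A] (q : ℝ) (y a : A) :
    a ∈ qcomm q y ↔ a * y = (q : ℂ) • (y * a) := Iff.rfl

def qcomm' {A : Type*} [Ring A] [Algebra ℂ A] (q : ℝ) (y : A) : Submodule ℂ A where
  carrier := {a | y * a = (q : ℂ) • (a * y)}
  zero_mem' := by simp
  add_mem' := by
    intro a b ha hb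
    simp only [Set.mem_ofPred_eq] at *
    rw [add_mul, mul_add, smul_add, ha, hb]
  smul_mem' := by
    intro c a ha
    simp only [Set.mem_ofPred_eq] at *
    rw [smul_mul_assoc, mul_smul_comm, ha, smul_comm]

theorem mem_qcomm' {A : Type*} [Ring A] [Algebra ℂ A] (q : ℝ) (y a : A) :
    a ∈ qcomm' q y ↔ y * a = (q : ℂ) • (a * y) := Iff.rfl

theorem star_rel {A : Type*} [Ring A] [Algebra ℂ A] [StarRing A] [StarModule ℂ A] (q : ℝ)
    (a y : A) : star y * a = (q : ℂ) • (a * star y) ↔ star a * y = (q : ℂ) • (y * star a) := by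
  rw [← star_inj]
  simp [star_smul]

theorem uMat_mem {A : Type*} [Ring A] [Algebra ℂ A] [StarRing A]
    (q : ℝ) (hq : q ≠ 0) (x : ℕ → A) (hx0 : star (x 0) = x 0) (S : Submodule ℂ A) (k : ℕ) :
    (∀ a b, uMat q x k a b ∈ S) ↔ ∀ i ≤ k, x i ∈ S ∧ star (x i) ∈ S := by
  induction k with
  | zero => simp [uMat, hx0]
  | succ k ih =>
    have hqc : ((q : ℂ)⁻¹) ≠ 0 := by simpa using hq
    have e := (finSumFinEquiv.trans (finCongr (by rw [pow_succ, mul_two])) :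
      Fin (2 ^ k) ⊕ Fin (2 ^ k) ≃ Fin (2 ^ (k + 1)))
    have h1 : (∀ a b, uMat q x (k + 1) a b ∈ S) ↔
        ∀ a b, (Matrix.fromBlocks ((q : ℂ)⁻¹ • uMat q x k)
        (x (k + 1) • (1 : Matrix (Fin (2 ^ k)) (Fin (2 ^ k)) A))
        (star (x (k + 1)) • (1 : Matrix (Fin (2 ^ k)) (Fin (2 ^ k)) A))
        (-uMat q x k)) a b ∈ S := by
      rw [uMat]
      simp only [Matrix.reindex_apply, Matrix.submatrix_apply]
      constructor
      · intro h a b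
        have := h ((finSumFinEquiv.trans (finCongr (by rw [pow_succ, mul_two]))) a)
          ((finSumFinEquiv.trans (finCongr (by rw [pow_succ, mul_two]))) b)
        simpa only [Equiv.symm_apply_apply] using this
      · intro h a b
        exact h _ _
    have key : ∀ z : A, (∀ a b : Fin (2 ^ k), (z • (1 : Matrix (Fin (2 ^ k)) (Fin (2 ^ k)) A)) a b ∈ S)
        ↔ z ∈ S := by
      intro z
      constructor
      · intro h
        simpa using h ⟨0, by positivity⟩ ⟨0, by positivity⟩
      · intro h a b
        by_cases hab : a = b
        · subst hab; simpa using h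
        · simp [Matrix.one_apply_ne hab]
    rw [h1]
    simp only [Sum.forall, Matrix.fromBlocks_apply₁₁, Matrix.fromBlocks_apply₁₂,
      Matrix.fromBlocks_apply₂₁, Matrix.fromBlocks_apply₂₂, forall_and, key]
    simp only [Matrix.smul_apply (_ : ℂ), Matrix.neg_apply, Submodule.smul_mem_iff S hqc, neg_mem_iff, ih]
    constructor
    · rintro ⟨⟨h, h2⟩, h3, -⟩
      constructor
      all_goals
        intro i hi
        rcases Nat.le_succ_iff.1 hi with hi | rfl
        · first | exact (h i hi).1 | exact (h i hi).2
        · assumption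
    · rintro ⟨h, h'⟩
      exact ⟨⟨fun i hi => ⟨h i (by omega), h' i (by omega)⟩, h' _ le_rfl⟩, h _ le_rfl,
        fun i hi => ⟨h i (by omega), h' i (by omega)⟩⟩

theorem uMat_sq_succ {A : Type*} [Ring A] [Algebra ℂ A] [StarRing A]
    (q : ℝ) (x : ℕ → A) (c : A) (k : ℕ) :
    uMat q x (k+1) * uMat q x (k+1) = c • 1 ↔
     (Matrix.fromBlocks ((q : ℂ)⁻¹ • uMat q x k)
        (x (k + 1) • (1 : Matrix (Fin (2 ^ k)) (Fin (2 ^ k)) A))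
        (star (x (k + 1)) • (1 : Matrix (Fin (2 ^ k)) (Fin (2 ^ k)) A))
        (-uMat q x k)) * (Matrix.fromBlocks ((q : ℂ)⁻¹ • uMat q x k)
        (x (k + 1) • (1 : Matrix (Fin (2 ^ k)) (Fin (2 ^ k)) A))
        (star (x (k + 1)) • (1 : Matrix (Fin (2 ^ k)) (Fin (2 ^ k)) A))
        (-uMat q x k)) = Matrix.fromBlocks (c • 1) 0 0 (c • 1) := by
  rw [uMat]
  simp only [Matrix.reindex_apply]
  rw [Matrix.submatrix_mul_equiv]
  have : (c • (1 : Matrix (Fin (2 ^ (k+1))) (Fin (2 ^ (k+1))) A)) =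
     (Matrix.reindex (finSumFinEquiv.trans (finCongr (by rw [pow_succ, mul_two])))
      (finSumFinEquiv.trans (finCongr (by rw [pow_succ, mul_two]))))
      (Matrix.fromBlocks (c • (1 : Matrix (Fin (2 ^ k)) (Fin (2 ^ k)) A)) 0 0
        (c • (1 : Matrix (Fin (2 ^ k)) (Fin (2 ^ k)) A))) := by
    have h : Matrix.fromBlocks (c • (1 : Matrix (Fin (2 ^ k)) (Fin (2 ^ k)) A)) 0 0
        (c • (1 : Matrix (Fin (2 ^ k)) (Fin (2 ^ k)) A))
      = c • 1 := by
      rw [← Matrix.fromBlocks_one, Matrix.fromBlocks_smul]; simp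
    rw [h, Matrix.reindex_apply, Matrix.submatrix_smul]
    simp only [Pi.smul_apply, Matrix.submatrix_one_equiv]
  rw [this, ← Matrix.reindex_apply]
  exact (Equiv.injective _).eq_iff

theorem smul_one_inj' {A : Type*} [Ring A] (k : ℕ) (a b : A) :
    a • (1 : Matrix (Fin (2 ^ k)) (Fin (2 ^ k)) A) = b • 1 ↔ a = b := by
  constructor
  · intro h
    simpa using congrFun (congrFun h ⟨0, by positivity⟩) ⟨0, by positivity⟩
  · rintro rfl; rfl

theorem mul_smul_one_apply {A : Type*} [Ring A] {m : ℕ} (M : Matrix (Fin m) (Fin m) A) (y : A)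
    (a b : Fin m) : (M * (y • (1 : Matrix (Fin m) (Fin m) A))) a b = M a b * y := by
  rw [Matrix.smul_one_eq_diagonal, Matrix.mul_diagonal]

theorem smul_one_mul_apply {A : Type*} [Ring A] {m : ℕ} (M : Matrix (Fin m) (Fin m) A) (y : A)
    (a b : Fin m) : ((y • (1 : Matrix (Fin m) (Fin m) A)) * M) a b = y * M a b := by
  rw [Matrix.smul_one_eq_diagonal, Matrix.diagonal_mul]

theorem q_flip {A : Type*} [Ring A] [Algebra ℂ A] (q : ℝ) (hq : q ≠ 0) (a b : A) :
    (q : ℂ)⁻¹ • a + -b = 0 ↔ a = (q : ℂ) • b := by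
  have hqc : (q : ℂ) ≠ 0 := by simpa using hq
  rw [← sub_eq_add_neg, sub_eq_zero, inv_smul_eq_iff₀ hqc]

theorem uMat_step {A : Type*} [Ring A] [Algebra ℂ A] [StarRing A] [StarModule ℂ A]
    (q : ℝ) (hq : q ≠ 0) (x : ℕ → A) (hx0 : star (x 0) = x 0) (c : A) (k : ℕ) :
    uMat q x (k+1) * uMat q x (k+1) = c • 1 ↔
      uMat q x k * uMat q x k = (c - star (x (k+1)) * x (k+1)) • 1 ∧
      x (k+1) * star (x (k+1)) = c - ((q : ℂ) ^ 2)⁻¹ • (c - star (x (k+1)) * x (k+1)) ∧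
      (∀ i ≤ k, x i * x (k+1) = (q : ℂ) • (x (k+1) * x i) ∧
        star (x i) * x (k+1) = (q : ℂ) • (x (k+1) * star (x i))) := by
  have hmem := uMat_mem q hq x hx0 (qcomm q (x (k+1))) k
  have hT : (q : ℂ)⁻¹ • uMat q x k * x (k+1) • 1 + x (k+1) • 1 * -uMat q x k = 0 ↔
      ∀ a b, uMat q x k a b ∈ qcomm q (x (k+1)) := by
    rw [← Matrix.ext_iff]
    refine forall_congr' fun a => forall_congr' fun b => ?_
    rw [Matrix.smul_mul, Matrix.mul_neg, Matrix.add_apply, Matrix.neg_apply, Matrix.smul_apply,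
      mul_smul_one_apply, smul_one_mul_apply, Matrix.zero_apply, q_flip q hq, mem_qcomm]
  have hB : (∀ i ≤ k, x i ∈ qcomm q (x (k+1)) ∧ star (x i) ∈ qcomm q (x (k+1))) →
      star (x (k+1)) • 1 * (q : ℂ)⁻¹ • uMat q x k + -uMat q x k * star (x (k+1)) • 1 = 0 := by
    intro h
    have h2 : ∀ a b, uMat q x k a b ∈ qcomm' q (star (x (k+1))) := by
      rw [uMat_mem q hq x hx0]
      intro i hi
      obtain ⟨h3, h4⟩ := h i hi
      rw [mem_qcomm] at h3 h4
      rw [mem_qcomm', mem_qcomm', star_rel, star_rel q (star (x i)), star_star]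
      exact ⟨h4, h3⟩
    ext a b
    rw [Matrix.mul_smul, Matrix.neg_mul, Matrix.add_apply, Matrix.neg_apply, Matrix.smul_apply,
      mul_smul_one_apply, smul_one_mul_apply, Matrix.zero_apply, q_flip q hq]
    exact h2 a b
  have hTL : ∀ d : A, uMat q x k * uMat q x k = d • 1 →
      ((q : ℂ)⁻¹ • uMat q x k * (q : ℂ)⁻¹ • uMat q x k + x (k+1) • 1 * star (x (k+1)) • 1 = c • 1 ↔
      x (k+1) * star (x (k+1)) = c - ((q : ℂ) ^ 2)⁻¹ • d) := by
    intro d hd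
    rw [Matrix.smul_mul, Matrix.mul_smul, hd, smul_smul, Matrix.smul_mul, Matrix.one_mul, smul_smul,
      ← smul_assoc, ← add_smul, smul_one_inj', eq_sub_iff_add_eq, add_comm, ← mul_inv, ← sq]
  rw [uMat_sq_succ, Matrix.fromBlocks_multiply, Matrix.fromBlocks_inj]
  have hBR : star (x (k+1)) • (1 : Matrix (Fin (2 ^ k)) (Fin (2 ^ k)) A) * x (k+1) • 1 + -uMat q x k * -uMat q x k = c • 1 ↔
      uMat q x k * uMat q x k = (c - star (x (k+1)) * x (k+1)) • 1 := by
    rw [neg_mul_neg, Matrix.smul_mul, Matrix.one_mul, smul_smul, sub_smul, eq_sub_iff_add_eq,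
      add_comm]
  rw [hBR, hT, hmem]
  constructor
  · rintro ⟨h1, h2, h3, h4⟩
    exact ⟨h4, (hTL _ h4).1 h1, h2⟩
  · rintro ⟨h4, h1, h2⟩
    exact ⟨(hTL _ h4).2 h1, h2, hB h2, h4⟩

theorem uMat_main {A : Type*} [Ring A] [Algebra ℂ A] [StarRing A]
    [StarModule ℂ A] (q : ℝ) (hq : q ≠ 0) (x : ℕ → A)
    (hx0 : star (x 0) = x 0) (n : ℕ) : ∀ c : A,
    uMat q x n * uMat q x n = c • 1 ↔
      ((∀ i j : ℕ, i < j → j ≤ n → x i * x j = (q : ℂ) • (x j * x i)) ∧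
       (∀ i j : ℕ, i ≤ n → j ≤ n → i ≠ j →
         star (x i) * x j = (q : ℂ) • (x j * star (x i))) ∧
       (∀ i : ℕ, 1 ≤ i → i ≤ n →
         x i * star (x i) - star (x i) * x i = (1 - ((q : ℂ) ^ 2)⁻¹) • sEven x (i - 1)) ∧
       sEven x n = c) := by
  induction n with
  | zero =>
    intro c
    have h0 : uMat q x 0 * uMat q x 0 = c • 1 ↔ sEven x 0 = c := by
      rw [← Matrix.ext_iff]
      have : ∀ a b : Fin (2 ^ 0), a = b := by decide
      constructor
      · intro h
        simpa [uMat, sEven, Matrix.mul_apply] using h 0 0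
      · intro h a b
        rw [this a b]
        simpa [uMat, sEven, Matrix.mul_apply] using h
    rw [h0]
    constructor
    · intro h
      exact ⟨fun i j _ _ => by omega, fun i j _ _ _ => by omega, fun i _ _ => by omega, h⟩
    · exact fun h => h.2.2.2
  | succ k ih =>
    intro c
    rw [uMat_step q hq x hx0, ih]
    constructor
    · rintro ⟨⟨h1, h2, h3, h4⟩, h5, h6⟩
      refine ⟨?_, ?_, ?_, ?_⟩
      · intro i j hij hj
        rcases Nat.le_succ_iff.1 hj with hj | rfl
        · exact h1 i j hij hj
        · exact (h6 i (by omega)).1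
      · intro i j hi hj hij
        rcases Nat.le_succ_iff.1 hj with hj | rfl
        · rcases Nat.le_succ_iff.1 hi with hi | rfl
          · exact h2 i j hi hj hij
          · rw [star_rel]
            exact (h6 j hj).2
        · exact (h6 i (by omega)).2
      · intro i hi hi'
        rcases Nat.le_succ_iff.1 hi' with hi' | rfl
        · exact h3 i hi hi'
        · rw [h5, Nat.succ_sub_one, h4, sub_smul, one_smul]; abel
      · rw [sEven, h4]; abel
    · rintro ⟨h1, h2, h3, h4⟩
      rw [sEven] at h4
      refine ⟨⟨fun i j hij hj => h1 i j hij (by omega),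
        fun i j hi hj hij => h2 i j (by omega) (by omega) hij,
        fun i hi hi' => h3 i hi (by omega), by rw [← h4]; abel⟩, ?_, ?_⟩
      · have := h3 (k+1) (by omega) le_rfl
        rw [Nat.add_sub_cancel, sub_smul, one_smul, sub_eq_iff_eq_add] at this
        rw [this, ← h4, add_sub_cancel_right]; abel
      · intro i hi
        exact ⟨h1 i _ (by omega) le_rfl, h2 i _ (by omega) le_rfl (by omega)⟩

/-- For `x₀` self-adjoint, the unipotency condition `u_{(2n)}² = 1` is equivalent to the
defining relations of the even quantum Euclidean sphere `S^{2n}_q`. -/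
theorem uMat_sq_one_iff_sphere_relations {A : Type*} [Ring A] [Algebra ℂ A] [StarRing A]
    [StarModule ℂ A] (q : ℝ) (hq : q ≠ 0) (n : ℕ) (hn : 1 ≤ n) (x : ℕ → A)
    (hx0 : star (x 0) = x 0) :
    uMat q x n * uMat q x n = 1 ↔
      ((∀ i j : ℕ, i < j → j ≤ n → x i * x j = (q : ℂ) • (x j * x i)) ∧
       (∀ i j : ℕ, i ≤ n → j ≤ n → i ≠ j →
         star (x i) * x j = (q : ℂ) • (x j * star (x i))) ∧
       (∀ i : ℕ, 1 ≤ i → i ≤ n →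
         x i * star (x i) - star (x i) * x i = (1 - ((q : ℂ) ^ 2)⁻¹) • sEven x (i - 1)) ∧
       sEven x n = 1) := by
  have h := uMat_main q hq x hx0 n 1
  rwa [one_smul] at h
end

section
/- Let A be a unital complex *-algebra, q a nonzero real number, and x₁, …, x_n ∈ A. Let u_{(2k−1)} denote the 2^k × 2^k matrix over A obtained by setting x₀ = 0 in the recursively defined unipotent matrix u_{(2k)} (so u_{(1)} = [[0, x₁],[x₁*, 0]] and u_{(2k−1)} = [[q⁻¹ u_{(2k−3)}, x_k·1],[x_k*·1, −u_{(2k−3)}]]). Let u'_{(2n+1)} be the 2^{n+1} × 2^{n+1} matrix obtained from u_{(2n+1)} (built from generators labelled x₁, …, x_{n+1}) by substituting x₁ ↦ 0 and x_{j+1} ↦ x_j for j = 1, …, n. Then u'_{(2n+1)} = u_{(2n−1)} ⊗ I₂, the Kronecker product of u_{(2n−1)} with the 2 × 2 identity matrix. -/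
def eS (k : ℕ) : Fin (2 ^ k) ⊕ Fin (2 ^ k) ≃ Fin (2 ^ (k + 1)) :=
  finSumFinEquiv.trans (finCongr (by rw [pow_succ, mul_two]))

def eP (k : ℕ) : Fin (2 ^ k) × Fin 2 ≃ Fin (2 ^ (k + 1)) :=
  finProdFinEquiv.trans (finCongr (by rw [pow_succ]))

theorem eP_inl (k : ℕ) (a : Fin (2 ^ k)) (b : Fin 2) :
    eP (k + 1) (eS k (Sum.inl a), b) = eS (k + 1) (Sum.inl (eP k (a, b))) := by
  ext; simp [eP, eS]

theorem eP_inr (k : ℕ) (a : Fin (2 ^ k)) (b : Fin 2) :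
    eP (k + 1) (eS k (Sum.inr a), b) = eS (k + 1) (Sum.inr (eP k (a, b))) := by
  ext; simp [eP, eS]; ring

theorem uMat_succ_eS {A : Type*} [Ring A] [Algebra ℂ A] [StarRing A] (q : ℝ) (x : ℕ → A)
    (k : ℕ) (s t : Fin (2 ^ k) ⊕ Fin (2 ^ k)) :
    uMat q x (k + 1) (eS k s) (eS k t) =
      (Matrix.fromBlocks ((q : ℂ)⁻¹ • uMat q x k)
        (x (k + 1) • (1 : Matrix (Fin (2 ^ k)) (Fin (2 ^ k)) A))
        (star (x (k + 1)) • (1 : Matrix (Fin (2 ^ k)) (Fin (2 ^ k)) A))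
        (-uMat q x k)) s t := by
  have h : uMat q x (k + 1) = Matrix.reindex (eS k) (eS k)
      (Matrix.fromBlocks ((q : ℂ)⁻¹ • uMat q x k)
        (x (k + 1) • (1 : Matrix (Fin (2 ^ k)) (Fin (2 ^ k)) A))
        (star (x (k + 1)) • (1 : Matrix (Fin (2 ^ k)) (Fin (2 ^ k)) A))
        (-uMat q x k)) := by
    rw [uMat]; rfl
  rw [h]
  simp

theorem uMat_entry {A : Type*} [Ring A] [Algebra ℂ A] [StarRing A] (q : ℝ) (x : ℕ → A) (n : ℕ) :
    ∀ (a c : Fin (2 ^ n)) (b d : Fin 2),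
    uMat q (fun i => if i ≤ 1 then 0 else x (i - 1)) (n + 1) (eP n (a, b)) (eP n (c, d)) =
      uMat q (fun i => if i = 0 then 0 else x i) n a c * (1 : Matrix (Fin 2) (Fin 2) A) b d := by
  induction n with
  | zero =>
    intro a c b d
    obtain ⟨s, hs⟩ := (eS 0).surjective (eP 0 (a, b))
    obtain ⟨t, ht⟩ := (eS 0).surjective (eP 0 (c, d))
    rw [← hs, ← ht, uMat_succ_eS]
    rcases s with s | s <;> rcases t with t | t <;> simp [uMat]
  | succ n ih =>
    intro a c b d
    obtain ⟨s, rfl⟩ := (eS n).surjective a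
    obtain ⟨t, rfl⟩ := (eS n).surjective c
    rw [uMat_succ_eS]
    rcases s with s | s <;> rcases t with t | t <;>
      simp only [eP_inl, eP_inr] <;> rw [uMat_succ_eS] <;>
      simp [ih, Matrix.one_apply, Prod.ext_iff] <;>
      split_ifs <;> simp_all

/-- Substituting `x₁ ↦ 0` and `x_{j+1} ↦ x_j` in the odd unipotent `u_{(2n+1)}`
(i.e. `u_{(2n+2)}` with `x₀ ↦ 0`) yields `u_{(2n-1)} ⊗ I₂`, the Kronecker product of the
lower odd unipotent with the `2 × 2` identity matrix. -/
theorem uMat_substitution_kronecker {A : Type*} [Ring A] [Algebra ℂ A] [StarRing A]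
    [StarModule ℂ A] (q : ℝ) (hq : q ≠ 0) (n : ℕ) (hn : 1 ≤ n) (x : ℕ → A) :
    uMat q (fun i => if i ≤ 1 then 0 else x (i - 1)) (n + 1) =
      Matrix.reindex (finProdFinEquiv.trans (finCongr (by rw [pow_succ])))
        (finProdFinEquiv.trans (finCongr (by rw [pow_succ])))
        (Matrix.kroneckerMap (· * ·) (uMat q (fun i => if i = 0 then 0 else x i) n)
          (1 : Matrix (Fin 2) (Fin 2) A)) := by
  ext i j
  obtain ⟨⟨a, b⟩, rfl⟩ := (eP n).surjective i
  obtain ⟨⟨c, d⟩, rfl⟩ := (eP n).surjective j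
  rw [uMat_entry]
  change _ = Matrix.reindex (eP n) (eP n) _ _ _
  simp
end

section
/- Let q ∈ ℝ with q² > 1 and let S be a nonempty closed subset of the interval [0,1] satisfying {1} ∪ S = {1} ∪ q⁻²·S, where q⁻²·S := {q⁻² s : s ∈ S}. Then either S = {0} or S = {0} ∪ {q^{−2k} : k = 0, 1, 2, …}. -/
/-- If `q² > 1` and `S` is a nonempty closed subset of `[0,1]` with
`{1} ∪ S = {1} ∪ q⁻²·S`, then `S = {0}` or `S = {0} ∪ {q^{-2k} : k ∈ ℕ}`. -/
theorem closed_scaling_invariant_subset (q : ℝ) (hq : 1 < q ^ 2) (S : Set ℝ)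
    (hne : S.Nonempty) (hcl : IsClosed S) (hsub : S ⊆ Set.Icc 0 1)
    (hinv : {1} ∪ S = {1} ∪ (fun s => (q ^ 2)⁻¹ * s) '' S) :
    S = {0} ∨ S = {0} ∪ Set.range fun k : ℕ => (q ^ (2 * k))⁻¹ := by
  have hfun : (fun k : ℕ => (q ^ (2 * k))⁻¹) = fun k : ℕ => ((q ^ 2)⁻¹) ^ k := by
    funext k
    rw [pow_mul, inv_pow]
  rw [hfun]
  have hr0 : 0 < (q ^ 2)⁻¹ := by positivity
  have hr1 : (q ^ 2)⁻¹ < 1 := inv_lt_one_of_one_lt₀ hq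
  generalize (q ^ 2)⁻¹ = r at *
  have down : ∀ s ∈ S, r * s ∈ S := by
    intro s hs
    have h : r * s ∈ ({1} : Set ℝ) ∪ S := by
      rw [hinv]
      exact Or.inr ⟨s, hs, rfl⟩
    rcases h with h | h
    · have h1 : r * s = 1 := h
      have := hsub hs
      nlinarith [this.1, this.2]
    · exact h
  have up : ∀ s ∈ S, s ≠ 1 → ∃ t ∈ S, r * t = s := by
    intro s hs h1
    have h : s ∈ ({1} : Set ℝ) ∪ (fun s => r * s) '' S := by
      rw [← hinv]
      exact Or.inr hs
    rcases h with h | h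
    · exact absurd h h1
    · exact h
  have downn : ∀ s ∈ S, ∀ n : ℕ, r ^ n * s ∈ S := by
    intro s hs n
    induction n with
    | zero => simpa using hs
    | succ n ih =>
      have := down _ ih
      rwa [← mul_assoc, ← pow_succ'] at this
  have htend : Filter.Tendsto (fun n : ℕ => r ^ n) Filter.atTop (nhds 0) :=
    tendsto_pow_atTop_nhds_zero_of_lt_one hr0.le hr1
  have h0 : (0 : ℝ) ∈ S := by
    obtain ⟨s, hs⟩ := hne
    have h := htend.mul_const s
    rw [zero_mul] at h
    exact hcl.mem_of_tendsto h (Filter.Eventually.of_forall (downn s hs))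
  have hS : ∀ s ∈ S, s = 0 ∨ ∃ k : ℕ, r ^ k = s := by
    intro s hs
    by_contra! hc
    obtain ⟨hs0, hk⟩ := hc
    have key : ∀ n : ℕ, ∃ t ∈ S, r ^ n * t = s := by
      intro n
      induction n with
      | zero => exact ⟨s, hs, by simp⟩
      | succ n ih =>
        obtain ⟨t, ht, hts⟩ := ih
        obtain ⟨u, hu, hut⟩ := up t ht (by
          rintro rfl
          exact hk n (by simpa using hts))
        exact ⟨u, hu, by rw [pow_succ, mul_assoc, hut, hts]⟩
    have hle : s ≤ 0 := by
      refine ge_of_tendsto' htend fun n => ?_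
      obtain ⟨t, ht, hts⟩ := key n
      rw [← hts]
      exact mul_le_of_le_one_right (by positivity) (hsub ht).2
    exact hs0 (le_antisymm hle (hsub hs).1)
  have hone : ∀ k : ℕ, r ^ k ∈ S → (1 : ℝ) ∈ S := by
    intro k
    induction k with
    | zero => intro h; simpa using h
    | succ k ih =>
      intro h
      obtain ⟨t, ht, hts⟩ := up _ h (pow_lt_one₀ hr0.le hr1 (Nat.succ_ne_zero k)).ne
      rw [pow_succ'] at hts
      have := mul_left_cancel₀ hr0.ne' hts
      exact ih (this ▸ ht)
  by_cases h1 : (1 : ℝ) ∈ S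
  · right
    ext x
    constructor
    · intro hx
      exact hS x hx
    · rintro (hx | ⟨k, rfl⟩)
      · have hx : x = 0 := hx
        rwa [hx]
      · simpa using downn 1 h1 k
  · left
    ext x
    constructor
    · intro hx
      rcases hS x hx with h | ⟨k, rfl⟩
      · exact h
      · exact absurd (hone k hx) h1
    · intro hx
      have hx : x = 0 := hx
      rwa [hx]
end

section
/- Let q ∈ ℝ with |q| > 1, n ≥ 1, and let H = ℓ²(ℕⁿ) with standard orthonormal basis (e_k) indexed by k = (k₀, …, k_{n−1}) ∈ ℕⁿ. Fix a sign ± and define operators on H by: X₀ e_k = ± q^{−(k₀+⋯+k_{n−1})} e_k, and for i = 1, …, n, X_i e_k = (1 − q^{−2k_{i−1}})^{1/2} q^{−(k_i+⋯+k_{n−1})} e_{k − δ_{i−1}} (interpreted as 0 when k_{i−1} = 0, where δ_{i−1} decreases the (i−1)-th index by 1). Then these formulas define bounded operators X₀, X₁, …, X_n on H, X₀ is self-adjoint, the adjoint X_i* acts by X_i* e_k = (1 − q^{−2(k_{i−1}+1)})^{1/2} q^{−(k_i+⋯+k_{n−1})} e_{k + δ_{i−1}}, and X₀, X₁, …, X_n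 satisfy the S^{2n}_q relations: X_i X_j = q X_j X_i for 0 ≤ i < j ≤ n; X_i* X_j = q X_j X_i* for i ≠ j; X_i X_i* − X_i* X_i = (1 − q⁻²) S_{i−1} for i = 1, …, n; and S_n = 1, where S₀ := X₀² and S_i := S_{i−1} + X_i* X_i. -/
/-- The standard orthonormal basis vector of `ℓ²(ℕⁿ)` at `k`. -/
noncomputable def eVec (n : ℕ) (k : Fin n → ℕ) : lp (fun _ : Fin n → ℕ => ℂ) 2 :=
  lp.single 2 k 1


theorem wc_exists {ι : Type*} (w : ι → ℝ) (hw : ∀ m, |w m| ≤ 1) (σ : ι → ι)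
    (hσ : Function.Injective σ) :
    ∃ T : lp (fun _ : ι => ℂ) 2 →L[ℂ] lp (fun _ : ι => ℂ) 2,
      ∀ f m, T f m = (w m : ℂ) * f (σ m) := by
  have h2 : 0 < (2 : ENNReal).toReal := by norm_num
  have hle : ∀ (f : lp (fun _ : ι => ℂ) 2) m,
      ‖(w m : ℂ) * f (σ m)‖ ^ (2 : ENNReal).toReal ≤ ‖f (σ m)‖ ^ (2 : ENNReal).toReal := by
    intro f m
    apply Real.rpow_le_rpow (norm_nonneg _) _ h2.le
    rw [norm_mul, Complex.norm_real, Real.norm_eq_abs]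
    exact mul_le_of_le_one_left (norm_nonneg _) (hw m)
  have hs : ∀ (f : lp (fun _ : ι => ℂ) 2),
      Summable fun m => ‖f (σ m)‖ ^ (2 : ENNReal).toReal := fun f =>
    ((lp.memℓp f).summable h2).comp_injective hσ
  have hs' : ∀ (f : lp (fun _ : ι => ℂ) 2),
      Summable fun m => ‖(w m : ℂ) * f (σ m)‖ ^ (2 : ENNReal).toReal := fun f =>
    Summable.of_nonneg_of_le (fun m => by positivity) (hle f) (hs f)
  let L : lp (fun _ : ι => ℂ) 2 →ₗ[ℂ] lp (fun _ : ι => ℂ) 2 :=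
    { toFun := fun f => ⟨fun m => (w m : ℂ) * f (σ m), memℓp_gen (hs' f)⟩
      map_add' := by
        intro f g
        ext m
        exact mul_add _ _ _
      map_smul' := by
        intro c f
        ext m
        exact mul_left_comm _ _ _ }
  refine ⟨L.mkContinuous 1 ?_, fun f m => rfl⟩
  intro f
  rw [one_mul]
  apply lp.norm_le_of_tsum_le h2 (norm_nonneg _)
  rw [lp.norm_rpow_eq_tsum h2 f]
  calc _ ≤ ∑' m, ‖f (σ m)‖ ^ (2 : ENNReal).toReal := (hs' f).tsum_le_tsum (hle f) (hs f)
    _ ≤ _ := tsum_comp_le_tsum_of_inj ((lp.memℓp f).summable h2) (fun m => by positivity) hσ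

theorem eVec_apply (n : ℕ) (k m : Fin n → ℕ) : eVec n k m = if m = k then 1 else 0 := by
  unfold eVec
  rw [lp.single_apply]
  by_cases h : m = k
  · subst h; simp
  · simp [h]

theorem clm_ext (n : ℕ) (S T : lp (fun _ : Fin n → ℕ => ℂ) 2 →L[ℂ] lp (fun _ : Fin n → ℕ => ℂ) 2)
    (h : ∀ k, S (eVec n k) = T (eVec n k)) : S = T := by
  apply lp.ext_continuousLinearMap (by norm_num)
  intro k
  ext : 1
  simpa [eVec] using h k

theorem star_eVec (n : ℕ) (w : (Fin n → ℕ) → ℝ) (σ : (Fin n → ℕ) → (Fin n → ℕ))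
    (T : lp (fun _ : Fin n → ℕ => ℂ) 2 →L[ℂ] lp (fun _ : Fin n → ℕ => ℂ) 2)
    (hT : ∀ f m, T f m = (w m : ℂ) * f (σ m)) (k : Fin n → ℕ) :
    star T (eVec n k) = (w k : ℂ) • eVec n (σ k) := by
  ext m
  have h1 : inner ℂ (eVec n m) (star T (eVec n k)) = inner ℂ (T (eVec n m)) (eVec n k) := by
    rw [ContinuousLinearMap.star_eq_adjoint, ContinuousLinearMap.adjoint_inner_right]
  unfold eVec at h1
  rw [lp.inner_single_left, lp.inner_single_right] at h1
  have h2 := hT (eVec n m) k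
  unfold eVec at h2
  rw [h2] at h1
  change inner ℂ 1 ((star T (eVec n k)) m) = inner ℂ ((w k : ℂ) * (eVec n m) (σ k)) 1 at h1
  rw [lp.coeFn_smul, Pi.smul_apply, smul_eq_mul, eVec_apply]
  rw [eVec_apply] at h1
  simp at h1
  rw [h1]
  by_cases h : σ k = m
  · simp [h]
  · simp [h, Ne.symm h]

theorem tail_up (n : ℕ) (s : Finset (Fin n)) (k : Fin n → ℕ) (i : Fin n) (h : i ∈ s) :
    ∑ j ∈ s, Function.update k i (k i + 1) j = ∑ j ∈ s, k j + 1 := by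
  rw [Finset.sum_update_of_mem h, ← Finset.add_sum_erase s k h, Finset.sdiff_singleton_eq_erase]
  ring

theorem tail_nup (n : ℕ) (s : Finset (Fin n)) (k : Fin n → ℕ) (i : Fin n) (v : ℕ) (h : i ∉ s) :
    ∑ j ∈ s, Function.update k i v j = ∑ j ∈ s, k j := 
  Finset.sum_update_of_notMem h _ _

theorem wc_eVec (n : ℕ) (w : (Fin n → ℕ) → ℝ) (σ : (Fin n → ℕ) → (Fin n → ℕ))
    (hσ : Function.Injective σ)
    (T : lp (fun _ : Fin n → ℕ => ℂ) 2 →L[ℂ] lp (fun _ : Fin n → ℕ => ℂ) 2)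
    (hT : ∀ f m, T f m = (w m : ℂ) * f (σ m)) (k : Fin n → ℕ) :
    T (eVec n (σ k)) = (w k : ℂ) • eVec n k := by
  ext m
  rw [hT, lp.coeFn_smul, Pi.smul_apply, smul_eq_mul, eVec_apply, eVec_apply]
  by_cases h : m = k
  · simp [h]
  · simp [h, hσ.eq_iff]

theorem wc_eVec_zero (n : ℕ) (w : (Fin n → ℕ) → ℝ) (σ : (Fin n → ℕ) → (Fin n → ℕ))
    (T : lp (fun _ : Fin n → ℕ => ℂ) 2 →L[ℂ] lp (fun _ : Fin n → ℕ => ℂ) 2)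
    (hT : ∀ f m, T f m = (w m : ℂ) * f (σ m)) (k : Fin n → ℕ) (hk : ∀ m, σ m ≠ k) :
    T (eVec n k) = 0 := by
  ext m
  rw [hT, eVec_apply]
  simp [hk]

theorem wc_comm (n : ℕ) (q : ℝ) (w₁ w₂ : (Fin n → ℕ) → ℝ) (σ₁ σ₂ : (Fin n → ℕ) → (Fin n → ℕ))
    (T₁ T₂ : lp (fun _ : Fin n → ℕ => ℂ) 2 →L[ℂ] lp (fun _ : Fin n → ℕ => ℂ) 2)
    (h₁ : ∀ f m, T₁ f m = (w₁ m : ℂ) * f (σ₁ m))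
    (h₂ : ∀ f m, T₂ f m = (w₂ m : ℂ) * f (σ₂ m))
    (hc : ∀ m, σ₁ (σ₂ m) = σ₂ (σ₁ m))
    (hw : ∀ m, w₁ m * w₂ (σ₁ m) = q * (w₂ m * w₁ (σ₂ m))) :
    T₁ * T₂ = (q : ℂ) • (T₂ * T₁) := by
  ext f m
  have e : ((q : ℂ) • (T₂ * T₁)) f = (q : ℂ) • T₂ (T₁ f) := rfl
  have hw' : (w₁ m : ℂ) * w₂ (σ₁ m) = q * (w₂ m * w₁ (σ₂ m)) := by exact_mod_cast hw m
  change (T₁ (T₂ f)) m = _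
  rw [e, lp.coeFn_smul, Pi.smul_apply, smul_eq_mul,
    h₁, h₂, h₂, h₁, hc]
  linear_combination hw' * f (σ₂ (σ₁ m))

theorem wc_star_comm (n : ℕ) (q : ℝ) (w₁ w₂ : (Fin n → ℕ) → ℝ)
    (σ₁ σ₂ : (Fin n → ℕ) → (Fin n → ℕ)) (hσ₂ : Function.Injective σ₂)
    (T₁ T₂ : lp (fun _ : Fin n → ℕ => ℂ) 2 →L[ℂ] lp (fun _ : Fin n → ℕ => ℂ) 2)
    (h₁ : ∀ f m, T₁ f m = (w₁ m : ℂ) * f (σ₁ m))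
    (h₂ : ∀ f m, T₂ f m = (w₂ m : ℂ) * f (σ₂ m))
    (hc : ∀ m, σ₁ (σ₂ m) = σ₂ (σ₁ m))
    (hr : ∀ k m, σ₂ m = σ₁ k → ∃ p, σ₂ p = k)
    (hw : ∀ m, w₁ m * w₂ m = q * (w₁ (σ₂ m) * w₂ (σ₁ m))) :
    star T₁ * T₂ = (q : ℂ) • (T₂ * star T₁) := by
  apply clm_ext
  intro k
  have e : ((q : ℂ) • (T₂ * star T₁)) (eVec n k) = (q : ℂ) • T₂ (star T₁ (eVec n k)) := rfl
  change star T₁ (T₂ (eVec n k)) = _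
  rw [e, star_eVec n w₁ σ₁ T₁ h₁]
  by_cases hk : ∃ p, σ₂ p = k
  · obtain ⟨p, rfl⟩ := hk
    rw [hc, wc_eVec n w₂ σ₂ hσ₂ T₂ h₂, map_smul, map_smul, wc_eVec n w₂ σ₂ hσ₂ T₂ h₂,
      star_eVec n w₁ σ₁ T₁ h₁, smul_smul, smul_smul, smul_smul]
    congr 1
    have := hw p
    have hw' : (w₁ p : ℂ) * w₂ p = q * (w₁ (σ₂ p) * w₂ (σ₁ p)) := by exact_mod_cast hw p
    linear_combination hw'
  · rw [wc_eVec_zero n w₂ σ₂ T₂ h₂ k (fun m hm => hk ⟨m, hm⟩), map_zero, map_smul,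
      wc_eVec_zero n w₂ σ₂ T₂ h₂ (σ₁ k) (fun m hm => hk (hr k m hm)), smul_zero, smul_zero]

noncomputable def wL (q : ℝ) (n : ℕ) (i : Fin n) (k : Fin n → ℕ) : ℝ :=
  Real.sqrt (1 - (q ^ (2 * (k i + 1)))⁻¹) *
    (q ^ (∑ j ∈ Finset.univ.filter fun j => i < j, k j))⁻¹

noncomputable def wD (q ε : ℝ) (n : ℕ) (k : Fin n → ℕ) : ℝ := ε * (q ^ (∑ j, k j))⁻¹

def up (n : ℕ) (i : Fin n) (k : Fin n → ℕ) : Fin n → ℕ := Function.update k i (k i + 1)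

theorem up_inj (n : ℕ) (i : Fin n) : Function.Injective (up n i) := by
  intro k m h
  funext j
  have := congrFun h j
  unfold up at this
  by_cases hj : j = i
  · subst hj; simpa using this
  · simpa [hj] using this

theorem up_comm (n : ℕ) (i j : Fin n) (h : i ≠ j) (k : Fin n → ℕ) :
    up n i (up n j k) = up n j (up n i k) := by
  unfold up
  rw [Function.update_of_ne h, Function.update_of_ne h.symm, Function.update_comm h]

theorem up_range (n : ℕ) (i : Fin n) (k : Fin n → ℕ) (h : k i ≠ 0) :
    up n i (Function.update k i (k i - 1)) = k := by
  unfold up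
  simp
  omega

theorem abs_pow_inv (q : ℝ) (hq : 1 < |q|) (m : ℕ) : |(q ^ m)⁻¹| ≤ 1 := by
  rw [abs_inv, abs_pow]
  exact inv_le_one_of_one_le₀ (one_le_pow₀ hq.le)

theorem one_sub_nonneg (q : ℝ) (hq : 1 < |q|) (m : ℕ) : 0 ≤ 1 - (q ^ m)⁻¹ := by
  have := (abs_le.1 (abs_pow_inv q hq m)).2
  linarith

theorem wL_le (q : ℝ) (hq : 1 < |q|) (n : ℕ) (i : Fin n) (k : Fin n → ℕ) : |wL q n i k| ≤ 1 := by
  unfold wL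
  rw [abs_mul]
  apply mul_le_one₀ _ (abs_nonneg _) (abs_pow_inv q hq _)
  rw [abs_of_nonneg (Real.sqrt_nonneg _), Real.sqrt_le_iff]
  refine ⟨zero_le_one, ?_⟩
  rw [pow_mul]
  have : 0 ≤ ((q ^ 2) ^ (k i + 1))⁻¹ := by positivity
  linarith

theorem wD_le (q ε : ℝ) (hq : 1 < |q|) (hε : ε = 1 ∨ ε = -1) (n : ℕ) (k : Fin n → ℕ) :
    |wD q ε n k| ≤ 1 := by
  unfold wD
  rw [abs_mul]
  have : |ε| = 1 := by rcases hε with h | h <;> simp [h]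
  rw [this, one_mul]
  exact abs_pow_inv q hq _

theorem wD_up (q ε : ℝ) (hq : q ≠ 0) (n : ℕ) (i : Fin n) (k : Fin n → ℕ) :
    q * wD q ε n (up n i k) = wD q ε n k := by
  unfold wD up
  rw [tail_up _ _ _ _ (Finset.mem_univ i), pow_succ]
  field_simp

theorem wL_up_lt (q : ℝ) (hq : q ≠ 0) (n : ℕ) (i j : Fin n) (h : i < j) (k : Fin n → ℕ) :
    q * wL q n i (up n j k) = wL q n i k := by
  unfold wL up
  rw [tail_up _ _ _ _ (by simpa using h), pow_succ, Function.update_of_ne h.ne]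
  field_simp

theorem wL_up_gt (q : ℝ) (n : ℕ) (i j : Fin n) (h : i < j) (k : Fin n → ℕ) :
    wL q n j (up n i k) = wL q n j k := by
  unfold wL up
  rw [tail_nup _ _ _ _ _ (by simpa using h.le), Function.update_of_ne h.ne']

/-- squared tail weight -/
noncomputable def tl (q : ℝ) (n : ℕ) (i : ℕ) (k : Fin n → ℕ) : ℝ :=
  ((q ^ (∑ j ∈ Finset.univ.filter fun j : Fin n => i ≤ (j : ℕ), k j))⁻¹) ^ 2

theorem tl_succ (q : ℝ) (n : ℕ) (i : Fin n) (k : Fin n → ℕ) :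
    tl q n i k = (q ^ (2 * k i))⁻¹ * tl q n (i + 1) k := by
  unfold tl
  have : (Finset.univ.filter fun j : Fin n => (i : ℕ) ≤ (j : ℕ)) =
      insert i (Finset.univ.filter fun j : Fin n => (i : ℕ) + 1 ≤ (j : ℕ)) := by
    ext j
    simp [Fin.ext_iff]
    omega
  rw [this, Finset.sum_insert (by simp), pow_add, mul_inv, mul_pow, mul_comm 2, pow_mul, inv_pow]

theorem wL_sq (q : ℝ) (hq : 1 < |q|) (n : ℕ) (i : Fin n) (k : Fin n → ℕ) :
    wL q n i k * wL q n i k = (1 - (q ^ (2 * (k i + 1)))⁻¹) * tl q n (i + 1) k := by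
  unfold wL tl
  have h := Real.mul_self_sqrt (one_sub_nonneg q hq (2 * (k i + 1)))
  have e : (Finset.univ.filter fun j : Fin n => i < j) =
      (Finset.univ.filter fun j : Fin n => (i : ℕ) + 1 ≤ (j : ℕ)) := by
    ext j
    simp only [Finset.mem_filter, Finset.mem_univ, true_and, Nat.succ_le_iff]
    rfl
  rw [e, mul_mul_mul_comm, h, sq]

theorem wL_down (q : ℝ) (n : ℕ) (i : Fin n) (k : Fin n → ℕ) (h : k i ≠ 0) :
    wL q n i (Function.update k i (k i - 1)) = Real.sqrt (1 - (q ^ (2 * k i))⁻¹) *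
    (q ^ (∑ j ∈ Finset.univ.filter fun j => i < j, k j))⁻¹ := by
  unfold wL
  have h1 : k i - 1 + 1 = k i := by omega
  rw [tail_nup _ _ _ _ _ (by simp), Function.update_self, h1]

theorem tl_down (q : ℝ) (n : ℕ) (i : Fin n) (k : Fin n → ℕ) (v : ℕ) :
    tl q n (i + 1) (Function.update k i v) = tl q n (i + 1) k := by
  unfold tl
  rw [tail_nup _ _ _ _ _ (by simp)]

theorem up_ne (n : ℕ) (i : Fin n) (k : Fin n → ℕ) (h : k i = 0) (m : Fin n → ℕ) :
    up n i m ≠ k := by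
  intro e
  have := congrFun e i
  simp [up, h] at this

theorem up_hr (n : ℕ) (i j : Fin n) (h : i ≠ j) (k m : Fin n → ℕ) (e : up n j m = up n i k) :
    ∃ p, up n j p = k := by
  refine ⟨Function.update k j (k j - 1), up_range n j k ?_⟩
  have := congrFun e j
  simp [up, h.symm] at this
  omega

/-- The formulas of the irreducible representation `ψ^{(2n)}_±` of `S^{2n}_q` define bounded
operators `X₀ = X₀*, X₁, …, Xₙ` on `ℓ²(ℕⁿ)` (with the stated adjoints) satisfying the
`S^{2n}_q` relations. -/
theorem evenSphere_representation (q : ℝ) (hq : 1 < |q|) (n : ℕ) (hn : 1 ≤ n)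
    (ε : ℝ) (hε : ε = 1 ∨ ε = -1) :
    ∃ X : ℕ → (lp (fun _ : Fin n → ℕ => ℂ) 2 →L[ℂ] lp (fun _ : Fin n → ℕ => ℂ) 2),
      (∀ k : Fin n → ℕ,
        X 0 (eVec n k) = (((ε * (q ^ (∑ j, k j))⁻¹ : ℝ)) : ℂ) • eVec n k) ∧
      (∀ i : Fin n, ∀ k : Fin n → ℕ,
        X ((i : ℕ) + 1) (eVec n k) =
          (((Real.sqrt (1 - (q ^ (2 * k i))⁻¹) *
            (q ^ (∑ j ∈ Finset.univ.filter fun j => i < j, k j))⁻¹ : ℝ)) : ℂ) •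
            eVec n (Function.update k i (k i - 1))) ∧
      star (X 0) = X 0 ∧
      (∀ i : Fin n, ∀ k : Fin n → ℕ,
        star (X ((i : ℕ) + 1)) (eVec n k) =
          (((Real.sqrt (1 - (q ^ (2 * (k i + 1)))⁻¹) *
            (q ^ (∑ j ∈ Finset.univ.filter fun j => i < j, k j))⁻¹ : ℝ)) : ℂ) •
            eVec n (Function.update k i (k i + 1))) ∧
      (∀ i j : ℕ, i < j → j ≤ n → X i * X j = (q : ℂ) • (X j * X i)) ∧
      (∀ i j : ℕ, i ≤ n → j ≤ n → i ≠ j →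
        star (X i) * X j = (q : ℂ) • (X j * star (X i))) ∧
      (∀ i : ℕ, 1 ≤ i → i ≤ n →
        X i * star (X i) - star (X i) * X i = (1 - ((q : ℂ) ^ 2)⁻¹) • sEven X (i - 1)) ∧
      sEven X n = 1 := by
  have hq0 : q ≠ 0 := by
    rintro rfl
    norm_num at hq
  obtain ⟨D, hD⟩ := wc_exists (wD q ε n) (wD_le q ε hq hε n) id Function.injective_id
  have hex := fun i : Fin n => wc_exists (wL q n i) (wL_le q hq n i) (up n i) (up_inj n i)
  choose L hL using hex
  let X : ℕ → (lp (fun _ : Fin n → ℕ => ℂ) 2 →L[ℂ] lp (fun _ : Fin n → ℕ => ℂ) 2) := fun j =>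
    match j with
    | 0 => D
    | i + 1 => if h : i < n then L ⟨i, h⟩ else 0
  have hX0 : X 0 = D := rfl
  have hX1 : ∀ i : Fin n, X (i + 1) = L i := fun i => by
    change (if h : (i : ℕ) < n then L ⟨i, h⟩ else 0) = L i
    rw [dif_pos i.2]
  have hX : ∀ i : ℕ, i ≤ n → i = 0 ∨ ∃ a : Fin n, i = a + 1 := by
    intro i hi
    rcases i with _ | i
    · exact Or.inl rfl
    · exact Or.inr ⟨⟨i, hi⟩, rfl⟩
  have sD : ∀ k, star D (eVec n k) = (wD q ε n k : ℂ) • eVec n k := fun k => star_eVec n _ _ D hD k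
  have sL : ∀ i k, star (L i) (eVec n k) = (wL q n i k : ℂ) • eVec n (up n i k) :=
    fun i k => star_eVec n _ _ (L i) (hL i) k
  have eD : ∀ k, D (eVec n k) = (wD q ε n k : ℂ) • eVec n k :=
    fun k => wc_eVec n _ id Function.injective_id D hD k
  have eL : ∀ i k, L i (eVec n (up n i k)) = (wL q n i k : ℂ) • eVec n k :=
    fun i k => wc_eVec n _ _ (up_inj n i) (L i) (hL i) k
  have zL : ∀ i k, k i = 0 → L i (eVec n k) = 0 :=
    fun i k h => wc_eVec_zero n _ _ (L i) (hL i) k (up_ne n i k h)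
  have hLs : ∀ i k, L i (star (L i) (eVec n k)) =
      (((1 - (q ^ (2 * (k i + 1)))⁻¹) * tl q n (i + 1) k : ℝ) : ℂ) • eVec n k := by
    intro i k
    rw [sL, map_smul, eL, smul_smul, ← wL_sq q hq, Complex.ofReal_mul]
  have hsL : ∀ i k, star (L i) (L i (eVec n k)) =
      (((1 - (q ^ (2 * k i))⁻¹) * tl q n (i + 1) k : ℝ) : ℂ) • eVec n k := by
    intro i k
    by_cases h : k i = 0
    · rw [zL i k h]
      simp [h]
    · obtain ⟨p, hp, hp2⟩ : ∃ p, up n i p = k ∧ p = Function.update k i (k i - 1) :=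
        ⟨_, up_range n i k h, rfl⟩
      have e1 : p i + 1 = k i := by rw [hp2, Function.update_self]; omega
      have e2 : tl q n (i + 1) p = tl q n (i + 1) k := by rw [hp2, tl_down]
      rw [← e1, ← e2, ← wL_sq q hq, ← hp, eL, map_smul, sL, smul_smul, Complex.ofReal_mul]
  have hS : ∀ i : ℕ, i ≤ n → ∀ k, sEven X i (eVec n k) = (tl q n i k : ℂ) • eVec n k := by
    intro i
    induction i with
    | zero =>
      intro _ k
      change D (D (eVec n k)) = _
      rw [eD, map_smul, eD, smul_smul, ← Complex.ofReal_mul]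
      congr 2
      unfold wD tl
      have : ε * ε = 1 := by rcases hε with h | h <;> simp [h]
      simp only [Nat.zero_le, Finset.filter_true]
      rw [mul_mul_mul_comm, this, one_mul, sq]
    | succ i ih =>
      intro hi k
      have h1 := hX1 ⟨i, hi⟩
      change X (i + 1) = _ at h1
      change sEven X i (eVec n k) + star (X (i + 1)) (X (i + 1) (eVec n k)) = _
      have h2 := tl_succ q n ⟨i, hi⟩ k
      rw [h1, hsL, ih (by omega), ← add_smul, ← Complex.ofReal_add]
      congr 2
      change tl q n i k = _ * tl q n (i + 1) k at h2
      change tl q n i k + (1 - _) * tl q n (i + 1) k = _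
      rw [h2]
      ring
  refine ⟨X, eD, ?_, ?_, ?_, ?_, ?_, ?_, ?_⟩
  · intro i k
    rw [hX1]
    by_cases h : k i = 0
    · rw [zL i k h]
      simp [h]
    · rw [← wL_down q n i k h, ← eL, up_range n i k h]
  · apply clm_ext
    intro k
    rw [hX0, sD, eD]
  · intro i k
    rw [hX1, sL]
    rfl
  · intro i j hij hj
    rcases hX j hj with rfl | ⟨b, rfl⟩
    · omega
    rcases hX i (by omega) with rfl | ⟨a, rfl⟩
    · rw [hX0, hX1]
      refine wc_comm n q _ _ _ _ _ _ hD (hL b) (fun m => rfl) (fun m => ?_)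
      have := wD_up q ε hq0 n b m
      simp only [id]
      rw [← this]
      ring
    · have hab : a < b := by rw [Fin.lt_def]; omega
      rw [hX1, hX1]
      refine wc_comm n q _ _ _ _ _ _ (hL a) (hL b) (up_comm n a b hab.ne) (fun m => ?_)
      rw [wL_up_gt q n a b hab, ← wL_up_lt q hq0 n a b hab m]
      ring
  · intro i j hi hj hij
    rcases hX j hj with rfl | ⟨b, rfl⟩
    · rcases hX i hi with rfl | ⟨a, rfl⟩
      · exact absurd rfl hij
      rw [hX0, hX1]
      refine wc_star_comm n q _ _ _ _ Function.injective_id _ _ (hL a) hD (fun m => rfl)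
        (fun k m _ => ⟨k, rfl⟩) (fun m => ?_)
      simp only [id]
      rw [← wD_up q ε hq0 n a m]
      ring
    rcases hX i hi with rfl | ⟨a, rfl⟩
    · rw [hX0, hX1]
      refine wc_star_comm n q _ _ _ _ (up_inj n b) _ _ hD (hL b) (fun m => rfl)
        (fun k m h => ⟨m, h⟩) (fun m => ?_)
      simp only [id]
      rw [← wD_up q ε hq0 n b m]
      ring
    · have hab : a ≠ b := by rintro rfl; exact hij rfl
      rw [hX1, hX1]
      refine wc_star_comm n q _ _ _ _ (up_inj n b) _ _ (hL a) (hL b) (up_comm n a b hab)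
        (up_hr n a b hab) (fun m => ?_)
      rcases lt_or_gt_of_ne hab with h | h
      · rw [wL_up_gt q n a b h, ← wL_up_lt q hq0 n a b h m]
        ring
      · rw [wL_up_gt q n b a h, ← wL_up_lt q hq0 n b a h m]
        ring
  · intro i hi hi'
    rcases hX i hi' with rfl | ⟨a, rfl⟩
    · omega
    rw [hX1, Nat.add_sub_cancel]
    apply clm_ext
    intro k
    change L a (star (L a) (eVec n k)) - star (L a) (L a (eVec n k)) =
      (1 - ((q : ℂ) ^ 2)⁻¹) • sEven X a (eVec n k)
    rw [hS a a.2.le, hLs, hsL, ← sub_smul, smul_smul, tl_succ]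
    congr 1
    push_cast
    rw [mul_add, pow_add]
    have : (q : ℂ) ≠ 0 := by exact_mod_cast hq0
    field_simp
    ring
  · apply clm_ext
    intro k
    rw [hS n le_rfl]
    have : tl q n n k = 1 := by
      unfold tl
      rw [Finset.filter_false_of_mem (fun j _ => by have := j.2; omega)]
      simp
    rw [this]
    simp
end

section
/- Let q ∈ ℝ with |q| > 1, n ≥ 1, λ ∈ ℂ with |λ| = 1, and let H = ℓ²(ℕⁿ) with standard orthonormal basis (e_k) indexed by k = (k₁, …, k_n) ∈ ℕⁿ. Define operators on H by: X₁ e_k = λ q^{−(k₁+⋯+k_n)} e_k, and for i = 2, …, n+1, X_i e_k = (1 − q^{−2k_{i−1}})^{1/2} q^{−(k_i+⋯+k_n)} e_{k − δ_{i−1}} (interpreted as 0 when k_{i−1} = 0, where δ_{i−1} decreases the (i−1)-th index by 1). Then these formulas define bounded operators X₁, …, X_{n+1} on H satisfying the S^{2n+1}_q relations: X_i X_j = q X_j X_i for 1 ≤ i < j ≤ n+1; X_i* X_j = q X_j X_i* for i ≠ j; X₁ X₁* = X₁* X₁; X_i X_i* − X_i* X_i = (1 − q⁻²) S_{i−1}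 for i = 2, …, n+1; and S_{n+1} = 1, where S₀ := 0 and S_i := S_{i−1} + X_i* X_i. -/
/-- Partial radii for the odd spheres: `s 0 = 0` and `s (i+1) = s i + (x (i+1))* * x (i+1)`. -/
def sOdd {A : Type*} [Ring A] [StarRing A] (x : ℕ → A) : ℕ → A
  | 0 => 0
  | i + 1 => sOdd x i + star (x (i + 1)) * x (i + 1)

noncomputable abbrev L2n (n : ℕ) := lp (fun _ : Fin n → ℕ => ℂ) 2

theorem exists_op (n : ℕ) (w : (Fin n → ℕ) → ℂ) (hw : ∀ m, ‖w m‖ ≤ 1)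
    (g : (Fin n → ℕ) → (Fin n → ℕ)) (hg : Function.Injective g) :
    ∃ T : L2n n →L[ℂ] L2n n, ∀ (x : L2n n) m, T x m = w m * x (g m) := by
  have h2 : 0 < (2 : ENNReal).toReal := by simp
  have key : ∀ (x : L2n n) (s : Finset (Fin n → ℕ)),
      ∑ m ∈ s, ‖w m * x (g m)‖ ^ (2 : ENNReal).toReal ≤ ‖x‖ ^ (2 : ENNReal).toReal := by
    intro x s
    calc _ ≤ ∑ m ∈ s, ‖x (g m)‖ ^ (2 : ENNReal).toReal := by
            gcongr with m _
            rw [norm_mul]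
            exact mul_le_of_le_one_left (norm_nonneg _) (hw m)
      _ = ∑ m ∈ s.map ⟨g, hg⟩, ‖x m‖ ^ (2 : ENNReal).toReal := by simp
      _ ≤ _ := lp.sum_rpow_le_norm_rpow h2 x _
  have mem : ∀ x : L2n n, Memℓp (fun m => w m * x (g m)) 2 := fun x => memℓp_gen' (key x)
  let T0 : L2n n →ₗ[ℂ] L2n n :=
    { toFun := fun x => ⟨fun m => w m * x (g m), mem x⟩
      map_add' := by
        intro x y
        ext m
        simp [mul_add]
        rfl
      map_smul' := by
        intro c x
        ext m
        simp [mul_left_comm] }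
  refine ⟨T0.mkContinuous 1 ?_, fun x m => rfl⟩
  intro x
  rw [one_mul]
  exact lp.norm_le_of_forall_sum_le h2 (norm_nonneg _) (key x)

theorem star_op (n : ℕ) (w : (Fin n → ℕ) → ℂ) (g : (Fin n → ℕ) → (Fin n → ℕ))
    (T : L2n n →L[ℂ] L2n n) (hT : ∀ (x : L2n n) m, T x m = w m * x (g m)) (k : Fin n → ℕ) :
    (star T) (eVec n k) = (starRingEnd ℂ (w k)) • eVec n (g k) := by
  ext m
  have h1 : (star T) (eVec n k) m = inner ℂ (eVec n m) ((star T) (eVec n k)) := by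
    unfold eVec
    rw [lp.inner_single_left]
    simp
  rw [h1, ContinuousLinearMap.star_eq_adjoint, ContinuousLinearMap.adjoint_inner_right]
  have h2 : inner ℂ (T (eVec n m)) (eVec n k) = starRingEnd ℂ (T (eVec n m) k) := by
    conv_lhs => rw [eVec.eq_1 n k]
    rw [lp.inner_single_right]
    simp
  rw [h2, hT, lp.coeFn_smul, Pi.smul_apply, eVec_apply, eVec_apply]
  by_cases h : g k = m
  · simp [h]
  · simp [h, Ne.symm h]

theorem op_ext (n : ℕ) (S T : L2n n →L[ℂ] L2n n) (h : ∀ k, S (eVec n k) = T (eVec n k)) :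
    S = T := by
  refine lp.ext_continuousLinearMap (by simp) fun k => ?_
  ext
  simpa [eVec] using congrFun (congrArg (fun x : L2n n => (x : _ → ℂ)) (h k)) _

def Tl {n : ℕ} (i : ℕ) (k : Fin n → ℕ) : ℕ := ∑ j ∈ Finset.univ.filter fun j : Fin n => i ≤ j, k j

theorem Tl_zero {n : ℕ} (k : Fin n → ℕ) : Tl 0 k = ∑ j, k j := by simp [Tl]

theorem Tl_n {n : ℕ} (k : Fin n → ℕ) : Tl n k = 0 := by
  simp only [Tl]
  rw [Finset.filter_false_of_mem]
  · simp
  · intro j _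
    have := j.2
    omega

theorem Tl_succ {n : ℕ} (i : Fin n) (k : Fin n → ℕ) : Tl i k = k i + Tl (i + 1) k := by
  simp only [Tl]
  rw [← Finset.sum_insert (a := i) (f := k)]
  · congr 1
    ext j
    simp [Fin.ext_iff]
    omega
  · simp

theorem Tl_lt {n : ℕ} (i : ℕ) (j : Fin n) (h : (j : ℕ) < i) (k : Fin n → ℕ) (v : ℕ) :
    Tl i (Function.update k j v) = Tl i k := by
  simp only [Tl]
  apply Finset.sum_congr rfl
  intro l hl
  rw [Function.update_of_ne]
  rintro rfl
  simp at hl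
  omega

theorem Tl_ge {n : ℕ} (i : ℕ) (j : Fin n) (h : i ≤ (j : ℕ)) (k : Fin n → ℕ) (v : ℕ) :
    Tl i (Function.update k j v) + k j = Tl i k + v := by
  simp only [Tl]
  rw [← Finset.add_sum_erase _ _ (a := j) (by simpa using h),
    ← Finset.add_sum_erase _ k (a := j) (by simpa using h)]
  have : ∑ x ∈ (Finset.univ.filter fun j : Fin n => i ≤ j).erase j, Function.update k j v x
      = ∑ x ∈ (Finset.univ.filter fun j : Fin n => i ≤ j).erase j, k x := by
    apply Finset.sum_congr rfl
    intro l hl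
    rw [Function.update_of_ne (Finset.ne_of_mem_erase hl)]
  rw [this]
  simp
  ring

theorem Tl_dec {n : ℕ} (i : ℕ) (j : Fin n) (h : i ≤ (j : ℕ)) (k : Fin n → ℕ) (hk : k j ≠ 0) :
    Tl i k = Tl i (Function.update k j (k j - 1)) + 1 := by
  have := Tl_ge i j h k (k j - 1)
  omega

theorem Tl_inc {n : ℕ} (i : ℕ) (j : Fin n) (h : i ≤ (j : ℕ)) (k : Fin n → ℕ) :
    Tl i (Function.update k j (k j + 1)) = Tl i k + 1 := by
  have := Tl_ge i j h k (k j + 1)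
  omega

/-- Abstract verification of the relations from the action on the basis. -/
theorem rels (n : ℕ) (q : ℝ) (p : ℂ) (hqp : (q : ℂ) * p = 1) (s : ℕ → ℂ) (hs0 : s 0 = 0)
    (hs : ∀ m, s m * s m = 1 - p ^ (2 * m)) (lam : ℂ) (hlam : lam * starRingEnd ℂ lam = 1)
    (X : ℕ → (L2n n →L[ℂ] L2n n))
    (h1 : ∀ k, X 1 (eVec n k) = (lam * p ^ Tl 0 k) • eVec n k)
    (h1s : ∀ k, star (X 1) (eVec n k) = (starRingEnd ℂ lam * p ^ Tl 0 k) • eVec n k)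
    (h2 : ∀ (i : Fin n) k, X ((i : ℕ) + 2) (eVec n k) =
      (s (k i) * p ^ Tl (i + 1) k) • eVec n (Function.update k i (k i - 1)))
    (h2s : ∀ (i : Fin n) k, star (X ((i : ℕ) + 2)) (eVec n k) =
      (s (k i + 1) * p ^ Tl (i + 1) k) • eVec n (Function.update k i (k i + 1))) :
      (∀ i j : ℕ, 1 ≤ i → i < j → j ≤ n + 1 → X i * X j = (q : ℂ) • (X j * X i)) ∧
      (∀ i j : ℕ, 1 ≤ i → i ≤ n + 1 → 1 ≤ j → j ≤ n + 1 → i ≠ j →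
        star (X i) * X j = (q : ℂ) • (X j * star (X i))) ∧
      X 1 * star (X 1) = star (X 1) * X 1 ∧
      (∀ i : ℕ, 2 ≤ i → i ≤ n + 1 →
        X i * star (X i) - star (X i) * X i = (1 - ((q : ℂ) ^ 2)⁻¹) • sOdd X (i - 1)) ∧
      sOdd X (n + 1) = 1 := by
  have cas : ∀ i : ℕ, 1 ≤ i → i ≤ n + 1 → i = 1 ∨ ∃ a : Fin n, i = (a : ℕ) + 2 := by
    intro i hi hi'
    rcases Nat.lt_or_ge i 2 with h | h
    · left; omega
    · right; exact ⟨⟨i - 2, by omega⟩, by simp; omega⟩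
  have hss : ∀ (i : Fin n) k, (star (X ((i : ℕ) + 2)) * X ((i : ℕ) + 2)) (eVec n k) =
      ((1 - p ^ (2 * k i)) * p ^ (2 * Tl (i + 1) k)) • eVec n k := by
    intro i k
    rw [mul_apply_eq_comp, h2, map_smul, h2s, smul_smul, Tl_lt _ _ (by simp)]
    rcases Nat.eq_zero_or_pos (k i) with h | h
    · simp [h, hs0]
    · simp only [Function.update_self, Function.update_idem, Nat.sub_add_cancel h,
        Function.update_eq_self]
      congr 1
      rw [← hs]
      ring
  have hS : ∀ i : ℕ, i ≤ n → ∀ k, sOdd X (i + 1) (eVec n k) = (p ^ (2 * Tl i k)) • eVec n k := by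
    intro i
    induction i with
    | zero =>
      intro _ k
      simp only [sOdd, zero_add, mul_apply_eq_comp, h1, map_smul, h1s, smul_smul]
      congr 1
      linear_combination p ^ (2 * Tl 0 k) * hlam
    | succ i ih =>
      intro hi k
      have e : sOdd X (i + 1 + 1) = sOdd X (i + 1) + star (X (i + 2)) * X (i + 2) := rfl
      have e2 := hss ⟨i, by omega⟩ k
      have e3 := Tl_succ ⟨i, by omega⟩ k
      simp only at e2 e3
      rw [e, ContinuousLinearMap.add_apply, ih (by omega), e2, ← add_smul, e3]
      congr 1
      ring
  refine ⟨?_, ?_, ?_, ?_, ?_⟩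
  · intro i j hi hij hj
    obtain ⟨b, rfl⟩ := (cas j (by omega) hj).resolve_left (by omega)
    apply op_ext
    intro k
    rcases cas i hi (by omega) with rfl | ⟨a, rfl⟩
    · simp only [ContinuousLinearMap.smul_apply, mul_apply_eq_comp, h1, h2, map_smul,
        smul_smul]
      congr 1
      rcases eq_or_ne (k b) 0 with h | h
      · simp [h, hs0]
      · rw [Tl_dec 0 b (by simp) k h]
        linear_combination (-s (k b) * p ^ Tl (b + 1) k * lam *
          p ^ Tl 0 (Function.update k b (k b - 1))) * hqp
    · have hab : (a : ℕ) < b := by omega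
      have hne : a ≠ b := by rintro rfl; omega
      simp only [ContinuousLinearMap.smul_apply, mul_apply_eq_comp, h2, map_smul,
        smul_smul, Function.update_of_ne hne, Function.update_of_ne hne.symm]
      rw [Function.update_comm hne, Tl_lt (b + 1) a (by omega)]
      congr 1
      rcases eq_or_ne (k b) 0 with h | h
      · simp [h, hs0]
      · rw [Tl_dec (a + 1) b (by omega) k h]
        linear_combination (-s (k b) * p ^ Tl (b + 1) k * s (k a) *
          p ^ Tl (a + 1) (Function.update k b (k b - 1))) * hqp
  · intro i j hi hi' hj hj' hij
    apply op_ext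
    intro k
    rcases cas i hi hi' with rfl | ⟨a, rfl⟩ <;> rcases cas j hj hj' with rfl | ⟨b, rfl⟩
    · exact absurd rfl hij
    · simp only [ContinuousLinearMap.smul_apply, mul_apply_eq_comp, h1s, h2, map_smul,
        smul_smul]
      congr 1
      rcases eq_or_ne (k b) 0 with h | h
      · simp [h, hs0]
      · rw [Tl_dec 0 b (by simp) k h]
        linear_combination (-s (k b) * p ^ Tl (b + 1) k * starRingEnd ℂ lam *
          p ^ Tl 0 (Function.update k b (k b - 1))) * hqp
    · simp only [ContinuousLinearMap.smul_apply, mul_apply_eq_comp, h1, h2s, map_smul,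
        smul_smul]
      congr 1
      rw [Tl_inc 0 a (by simp) k]
      linear_combination (-s (k a + 1) * p ^ Tl (a + 1) k * lam *
          p ^ Tl 0 k) * hqp
    · have hne : a ≠ b := by rintro rfl; omega
      simp only [ContinuousLinearMap.smul_apply, mul_apply_eq_comp, h2, h2s, map_smul,
        smul_smul, Function.update_of_ne hne, Function.update_of_ne hne.symm]
      rw [Function.update_comm hne]
      congr 1
      rcases Nat.lt_or_ge a b with hab | hab
      · rw [Tl_lt (b + 1) a (by omega)]
        rcases eq_or_ne (k b) 0 with h | h
        · simp [h, hs0]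
        · rw [Tl_dec (a + 1) b (by omega) k h]
          linear_combination (-s (k b) * p ^ Tl (b + 1) k * s (k a + 1) *
            p ^ Tl (a + 1) (Function.update k b (k b - 1))) * hqp
      · have hab' : (b : ℕ) < a := by omega
        rw [Tl_lt (a + 1) b (by omega), Tl_inc (b + 1) a (by omega)]
        linear_combination (-s (k b) * p ^ Tl (b + 1) k * s (k a + 1) *
            p ^ Tl (a + 1) k) * hqp
  · apply op_ext
    intro k
    simp only [mul_apply_eq_comp, h1, h1s, map_smul, smul_smul]
    congr 1
    ring
  · intro i hi hi'
    obtain ⟨a, rfl⟩ := (cas i (by omega) hi').resolve_left (by omega)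
    apply op_ext
    intro k
    have hp : ((q : ℂ) ^ 2)⁻¹ = p ^ 2 := by
      rw [← inv_pow, inv_eq_of_mul_eq_one_right hqp]
    have e : (X (a + 2) * star (X (a + 2))) (eVec n k) =
        ((1 - p ^ (2 * (k a + 1))) * p ^ (2 * Tl (a + 1) k)) • eVec n k := by
      rw [mul_apply_eq_comp, h2s, map_smul, h2, smul_smul, Tl_lt _ _ (by simp)]
      simp only [Function.update_self, Function.update_idem, Nat.add_sub_cancel,
        Function.update_eq_self]
      congr 1
      rw [← hs]
      ring
    rw [ContinuousLinearMap.sub_apply, hss, e, ContinuousLinearMap.smul_apply]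
    rw [show (a : ℕ) + 2 - 1 = a + 1 by omega, hS a a.2.le, hp, Tl_succ, smul_smul, ← sub_smul]
    congr 1
    ring
  · apply op_ext
    intro k
    rw [hS n le_rfl, Tl_n]
    simp

/-- The formulas of the irreducible representation `ψ^{(2n+1)}_λ` of `S^{2n+1}_q` define
bounded operators `X₁, …, X_{n+1}` on `ℓ²(ℕⁿ)` satisfying the `S^{2n+1}_q` relations. -/
theorem oddSphere_representation (q : ℝ) (hq : 1 < |q|) (n : ℕ) (hn : 1 ≤ n)
    (lam : ℂ) (hlam : ‖lam‖ = 1) :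
    ∃ X : ℕ → (lp (fun _ : Fin n → ℕ => ℂ) 2 →L[ℂ] lp (fun _ : Fin n → ℕ => ℂ) 2),
      (∀ k : Fin n → ℕ,
        X 1 (eVec n k) = (lam * (((q ^ (∑ j, k j))⁻¹ : ℝ) : ℂ)) • eVec n k) ∧
      (∀ i : Fin n, ∀ k : Fin n → ℕ,
        X ((i : ℕ) + 2) (eVec n k) =
          (((Real.sqrt (1 - (q ^ (2 * k i))⁻¹) *
            (q ^ (∑ j ∈ Finset.univ.filter fun j => i < j, k j))⁻¹ : ℝ)) : ℂ) •
            eVec n (Function.update k i (k i - 1))) ∧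
      (∀ i j : ℕ, 1 ≤ i → i < j → j ≤ n + 1 → X i * X j = (q : ℂ) • (X j * X i)) ∧
      (∀ i j : ℕ, 1 ≤ i → i ≤ n + 1 → 1 ≤ j → j ≤ n + 1 → i ≠ j →
        star (X i) * X j = (q : ℂ) • (X j * star (X i))) ∧
      X 1 * star (X 1) = star (X 1) * X 1 ∧
      (∀ i : ℕ, 2 ≤ i → i ≤ n + 1 →
        X i * star (X i) - star (X i) * X i = (1 - ((q : ℂ) ^ 2)⁻¹) • sOdd X (i - 1)) ∧
      sOdd X (n + 1) = 1 := by
  have hq0 : q ≠ 0 := by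
    rintro rfl
    simp at hq
    linarith
  set s : ℕ → ℝ := fun m => Real.sqrt (1 - (q ^ (2 * m))⁻¹) with hsdef
  have hpow : ∀ m : ℕ, 1 ≤ q ^ (2 * m) := by
    intro m
    rw [pow_mul, ← sq_abs, ← pow_mul]
    exact one_le_pow₀ hq.le
  have hinv : ∀ m : ℕ, (q ^ (2 * m))⁻¹ ≤ 1 := fun m => inv_le_one_of_one_le₀ (hpow m)
  have hss : ∀ m, s m * s m = 1 - (q ^ (2 * m))⁻¹ := fun m =>
    Real.mul_self_sqrt (by have := hinv m; linarith)
  have hs0 : s 0 = 0 := by simp [hsdef]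
  have hs1 : ∀ m, |s m| ≤ 1 := by
    intro m
    rw [abs_of_nonneg (Real.sqrt_nonneg _)]
    apply Real.sqrt_le_one.mpr
    have : 0 < (q ^ (2 * m))⁻¹ := inv_pos.mpr (lt_of_lt_of_le one_pos (hpow m))
    linarith
  set p : ℂ := ((q⁻¹ : ℝ) : ℂ) with hp
  have hpn : ∀ m : ℕ, ‖p ^ m‖ ≤ 1 := by
    intro m
    rw [norm_pow]
    apply pow_le_one₀ (norm_nonneg _)
    rw [hp, Complex.norm_real, norm_inv]
    exact inv_le_one_of_one_le₀ hq.le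
  have hpc : ∀ m : ℕ, (((q ^ m)⁻¹ : ℝ) : ℂ) = p ^ m := by
    intro m
    rw [hp, ← Complex.ofReal_pow, inv_pow]
  have hpconj : starRingEnd ℂ p = p := Complex.conj_ofReal _
  have ginj : ∀ i : Fin n, Function.Injective
      (fun k : Fin n → ℕ => Function.update k i (k i + 1)) := by
    intro i k l h
    ext j
    have := congrFun h j
    by_cases hj : j = i
    · subst hj
      simpa using this
    · simpa [Function.update_of_ne hj] using this
  obtain ⟨X1, hX1⟩ := exists_op n (fun k => lam * p ^ Tl 0 k)
    (fun m => by rw [norm_mul, hlam, one_mul]; exact hpn _) id Function.injective_id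
  have hY := fun i : Fin n => exists_op n (fun k => (s (k i + 1) : ℂ) * p ^ Tl (i + 1) k)
    (fun m => by
      rw [norm_mul, Complex.norm_real]
      exact mul_le_one₀ (hs1 _) (norm_nonneg _) (hpn _)) _ (ginj i)
  choose Y hY using hY
  let X : ℕ → (L2n n →L[ℂ] L2n n) := fun i =>
    if i = 1 then X1 else if h : i - 2 < n then Y ⟨i - 2, h⟩ else 0
  have x1 : X 1 = X1 := by simp [X]
  have x2 : ∀ i : Fin n, X ((i : ℕ) + 2) = Y i := by
    intro i
    simp [X]
  have a1 : ∀ k, X 1 (eVec n k) = (lam * p ^ Tl 0 k) • eVec n k := by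
    intro k
    ext m
    rw [x1, hX1, lp.coeFn_smul, Pi.smul_apply, id, eVec_apply]
    by_cases h : m = k
    · simp [h]
    · simp [h]
  have a2 : ∀ (i : Fin n) k, X ((i : ℕ) + 2) (eVec n k) =
      ((s (k i) : ℂ) * p ^ Tl (i + 1) k) • eVec n (Function.update k i (k i - 1)) := by
    intro i k
    ext m
    rw [x2, hY, lp.coeFn_smul, Pi.smul_apply, eVec_apply, eVec_apply]
    by_cases h : Function.update m i (m i + 1) = k
    · subst h
      simp [Tl_lt]
    · rw [if_neg h, mul_zero]
      rcases Nat.eq_zero_or_pos (k i) with h0 | h0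
      · simp [h0, hs0]
      · rw [if_neg, smul_zero]
        rintro rfl
        apply h
        simp [Nat.sub_add_cancel h0]
  have hlam' : lam * starRingEnd ℂ lam = 1 := by
    rw [Complex.mul_conj, Complex.normSq_eq_norm_sq, hlam]
    simp
  refine ⟨X, ?_, ?_, rels n q p ?_ (fun m => (s m : ℂ)) (by simp [hs0]) ?_ lam hlam' X a1 ?_ a2 ?_⟩
  · intro k
    rw [a1, Tl_zero, hpc]
  · intro i k
    rw [a2, Complex.ofReal_mul, hpc]
    rfl
  · rw [hp, ← Complex.ofReal_mul, mul_inv_cancel₀ hq0, Complex.ofReal_one]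
  · intro m
    rw [← hpc, ← Complex.ofReal_mul, hss]
    simp
  · intro k
    rw [x1, star_op n _ _ X1 hX1]
    simp only [map_mul, map_pow, hpconj, id]
  · intro i k
    rw [x2, star_op n _ _ (Y i) (hY i)]
    simp only [map_mul, map_pow, hpconj, Complex.conj_ofReal]
end

section
/- Let A be a unital complex algebra, q a nonzero real number, and x₀, x₁, …, x_n ∈ A. Define recursively the 2^k × 2^k matrices u_{(2k)} over A by u_{(0)} = x₀ and u_{(2k)} = [[q⁻¹ u_{(2k−2)}, x_k·1], [x_k*·1, −u_{(2k−2)}]]. Then the matrix trace satisfies tr(u_{(2n)}) = (q⁻¹ − 1)ⁿ x₀; consequently tr(e_{(2n)}) = 2^{n−1} + (1/2)(q⁻¹ − 1)ⁿ x₀ for the idempotent e_{(2n)} = (1 + u_{(2n)})/2. -/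
/-- The matrix trace of the unipotent satisfies `tr(u_{(2n)}) = (q⁻¹ - 1)ⁿ x₀`, and hence
the idempotent `e_{(2n)} = (1 + u_{(2n)})/2` has matrix trace
`2^{n-1} + ½ (q⁻¹ - 1)ⁿ x₀`. -/
theorem uMat_trace {A : Type*} [Ring A] [Algebra ℂ A] [StarRing A] [StarModule ℂ A]
    (q : ℝ) (hq : q ≠ 0) (n : ℕ) (hn : 1 ≤ n) (x : ℕ → A) :
    Matrix.trace (uMat q x n) = (((q : ℂ)⁻¹ - 1) ^ n) • x 0 ∧
    Matrix.trace ((2 : ℂ)⁻¹ • ((1 : Matrix (Fin (2 ^ n)) (Fin (2 ^ n)) A) + uMat q x n)) =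
      ((2 : ℂ) ^ (n - 1)) • (1 : A) + ((2 : ℂ)⁻¹ * ((q : ℂ)⁻¹ - 1) ^ n) • x 0 := by
  have key : ∀ k : ℕ, Matrix.trace (uMat q x k) = (((q : ℂ)⁻¹ - 1) ^ k) • x 0 := by
    intro k
    induction k with
    | zero => simp [uMat, Matrix.trace]
    | succ k ih =>
      have hre : ∀ (m : ℕ) (e : Fin (2 ^ k) ⊕ Fin (2 ^ k) ≃ Fin m)
          (M : Matrix (Fin (2 ^ k) ⊕ Fin (2 ^ k)) (Fin (2 ^ k) ⊕ Fin (2 ^ k)) A),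
          Matrix.trace (Matrix.reindex e e M) = Matrix.trace M := by
        intro m e M
        simp only [Matrix.trace, Matrix.diag, Matrix.reindex_apply, Matrix.submatrix_apply]
        exact Equiv.sum_comp e.symm (fun i => M i i)
      have hb : ∀ P Q R S : Matrix (Fin (2 ^ k)) (Fin (2 ^ k)) A,
          Matrix.trace (Matrix.fromBlocks P Q R S) = Matrix.trace P + Matrix.trace S := by
        intro P Q R S
        simp [Matrix.trace, Fintype.sum_sum_type]
      rw [uMat, hre, hb, Matrix.trace_smul, Matrix.trace_neg, ih,
        smul_smul, ← sub_eq_add_neg, ← sub_smul]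
      congr 1
      ring
  refine ⟨key n, ?_⟩
  rw [Matrix.trace_smul, Matrix.trace_add, key n, Matrix.trace_one, smul_add, smul_smul]
  congr 1
  obtain ⟨m, rfl⟩ : ∃ m, n = m + 1 := ⟨n - 1, by omega⟩
  have h : ((Fintype.card (Fin (2 ^ (m + 1))) : ℕ) : A) = ((2 : ℂ) ^ (m + 1)) • (1 : A) := by
    rw [Fintype.card_fin, ← Algebra.algebraMap_eq_smul_one]
    rw [map_pow, map_ofNat]
    push_cast
    rfl
  rw [h, smul_smul]
  congr 1
  rw [Nat.add_sub_cancel, pow_succ]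
  ring
end

section
/- Let A be a unital complex *-algebra, q a nonzero real number, and x₁, …, x_{n+1} ∈ A elements satisfying the S^{2n+1}_q relations: x_i x_j = q x_j x_i for 1 ≤ i < j ≤ n+1; x_i* x_j = q x_j x_i* for i ≠ j; x_i x_i* − x_i* x_i = (1 − q⁻²) s_{i−1} for i = 1, …, n+1 (with s₀ := 0, s_i := s_{i−1} + x_i* x_i); and s_{n+1} = 1. Define recursively the 2^k × 2^k matrices V_{(2k+1)} over A by V_{(1)} = x₁ and V_{(2k+1)} = [[x_{k+1}·1, q⁻¹ V_{(2k−1)}], [−V_{(2k−1)}*, x_{k+1}*·1]]. Then V_{(2n+1)} is unitary: V_{(2n+1)} V_{(2n+1)}* = V_{(2n+1)}* V_{(2n+1)} = 1. -/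
/-- The defining relations of the odd quantum Euclidean sphere `S^{2n+1}_q` on elements
`x₁, …, x_{n+1}`. -/
def OddSphereRel {A : Type*} [Ring A] [Algebra ℂ A] [StarRing A]
    (q : ℝ) (n : ℕ) (x : ℕ → A) : Prop :=
  (∀ i j : ℕ, 1 ≤ i → i < j → j ≤ n + 1 → x i * x j = (q : ℂ) • (x j * x i)) ∧
  (∀ i j : ℕ, 1 ≤ i → i ≤ n + 1 → 1 ≤ j → j ≤ n + 1 → i ≠ j →
    star (x i) * x j = (q : ℂ) • (x j * star (x i))) ∧
  (∀ i : ℕ, 1 ≤ i → i ≤ n + 1 →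
    x i * star (x i) - star (x i) * x i = (1 - ((q : ℂ) ^ 2)⁻¹) • sOdd x (i - 1)) ∧
  sOdd x (n + 1) = 1

/-- The recursively defined matrices `V_{(2k+1)}`: `V_{(1)} = x₁` and
`V_{(2k+1)} = [[x_{k+1}·1, q⁻¹ V_{(2k-1)}], [-V_{(2k-1)}*, x_{k+1}*·1]]`. -/
noncomputable def vMat {A : Type*} [Ring A] [Algebra ℂ A] [StarRing A] (q : ℝ) (x : ℕ → A) :
    (k : ℕ) → Matrix (Fin (2 ^ k)) (Fin (2 ^ k)) A
  | 0 => Matrix.of fun _ _ => x 1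
  | k + 1 =>
    Matrix.reindex (finSumFinEquiv.trans (finCongr (by rw [pow_succ, mul_two])))
      (finSumFinEquiv.trans (finCongr (by rw [pow_succ, mul_two])))
      (Matrix.fromBlocks (x (k + 2) • (1 : Matrix (Fin (2 ^ k)) (Fin (2 ^ k)) A))
        ((q : ℂ)⁻¹ • vMat q x k)
        (-(star (vMat q x k)))
        (star (x (k + 2)) • (1 : Matrix (Fin (2 ^ k)) (Fin (2 ^ k)) A)))

theorem vMat_comm_aux {A : Type*} [Ring A] [Algebra ℂ A] [StarRing A] [StarModule ℂ A]
    (q : ℝ) (x : ℕ → A) (c : ℂ) (y : A) (k : ℕ)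
    (h : ∀ i, 1 ≤ i → i ≤ k + 1 → x i * y = c • (y * x i) ∧ star (x i) * y = c • (y * star (x i))) :
    ∀ a b, vMat q x k a b * y = c • (y * vMat q x k a b) ∧
      star (vMat q x k a b) * y = c • (y * star (vMat q x k a b)) := by
  induction k with
  | zero => intro a b; simpa [vMat] using h 1 le_rfl (by simp)
  | succ k ih =>
    intro a b
    have ih' := ih (fun i h1 h2 => h i h1 (by omega))
    have hk := h (k + 2) (by omega) (by omega)
    simp only [vMat, Matrix.reindex_apply, Matrix.submatrix_apply]
    generalize (Equiv.symm _) a = a'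
    generalize (Equiv.symm _) b = b'
    rcases a' with a' | a' <;> rcases b' with b' | b'
    · by_cases hab : a' = b' <;> simp [Matrix.one_apply, hab, hk.1, hk.2]
    · have := ih' a' b'
      simp [this.1, this.2, smul_comm c]
    · have := ih' b' a'
      simp [this.1, this.2, Matrix.star_apply]
    · by_cases hab : a' = b' <;> simp [Matrix.one_apply, hab, hk.1, hk.2]

theorem vMat_radius {A : Type*} [Ring A] [Algebra ℂ A] [StarRing A] [StarModule ℂ A]
    (q : ℝ) (hq : q ≠ 0) (n : ℕ) (x : ℕ → A)
    (hrel : OddSphereRel q n x) (k : ℕ) (hk : k ≤ n) :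
    vMat q x k * star (vMat q x k) = Matrix.diagonal (fun _ => sOdd x (k + 1)) ∧
    star (vMat q x k) * vMat q x k = Matrix.diagonal (fun _ => sOdd x (k + 1)) := by
  obtain ⟨h1, h2, h3, -⟩ := hrel
  have hqc : (q : ℂ) ≠ 0 := by exact_mod_cast hq
  induction k with
  | zero =>
    have := h3 1 le_rfl (by omega)
    simp only [sOdd, Nat.sub_self, smul_zero, sub_eq_zero] at this
    constructor <;> ext a b <;> obtain rfl : a = b := Subsingleton.elim (α := Fin 1) a b <;>
      simp [vMat, sOdd, Matrix.mul_apply, Matrix.star_apply, this]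
  | succ k ih =>
    obtain ⟨ia, ib⟩ := ih (by omega)
    have c1 := vMat_comm_aux q x q (x (k + 2)) k (fun i hi hi' =>
      ⟨h1 i (k + 2) hi (by omega) (by omega),
       h2 i (k + 2) hi (by omega) (by omega) (by omega) (by omega)⟩)
    have c2 := vMat_comm_aux q x (q : ℂ)⁻¹ (star (x (k + 2))) k (fun i hi hi' => by
      constructor
      · rw [h2 (k + 2) i (by omega) (by omega) hi (by omega) (by omega), inv_smul_smul₀ hqc]
      · have := congrArg star (h1 i (k + 2) hi (by omega) (by omega))
        simp only [star_mul, star_smul, RCLike.star_def, Complex.conj_ofReal] at this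
        rw [this, inv_smul_smul₀ hqc])
    have h3' := h3 (k + 2) (by omega) (by omega)
    simp only [Nat.add_sub_cancel, show k + 2 - 1 = k + 1 by omega] at h3'
    have h3'' : x (k+2) * star (x (k+2)) + ((q:ℂ)⁻¹ * (q:ℂ)⁻¹) • sOdd x (k+1) =
        sOdd x (k + 1) + star (x (k+2)) * x (k+2) := by
      rw [sub_eq_iff_eq_add] at h3'
      rw [h3', sub_smul, one_smul, pow_two, mul_inv]
      abel
    have hs : sOdd x (k + 1 + 1) = sOdd x (k + 1) + star (x (k+2)) * x (k+2) := rfl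
    have hst : star ((q : ℂ)⁻¹ • vMat q x k) = (q : ℂ)⁻¹ • star (vMat q x k) := by
      rw [star_smul]; simp
    set V := vMat q x k with hV
    set y := x (k + 2) with hy
    have m1 : V * Matrix.diagonal (fun _ => y) = (q : ℂ) • (Matrix.diagonal (fun _ => y) * V) := by
      ext a b; simp [(c1 a b).1]
    have m2 : star V * Matrix.diagonal (fun _ => y) =
        (q : ℂ) • (Matrix.diagonal (fun _ => y) * star V) := by
      ext a b; simp [Matrix.star_apply, (c1 b a).2]
    have m3 : V * Matrix.diagonal (fun _ => star y) =
        (q : ℂ)⁻¹ • (Matrix.diagonal (fun _ => star y) * V) := by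
      ext a b; simp [(c2 a b).1]
    have m4 : star V * Matrix.diagonal (fun _ => star y) =
        (q : ℂ)⁻¹ • (Matrix.diagonal (fun _ => star y) * star V) := by
      ext a b; simp [Matrix.star_apply, (c2 b a).2]
    have d : ∀ z : A, star (Matrix.diagonal (fun _ : Fin (2 ^ k) => z)) =
        Matrix.diagonal (fun _ => star z) := fun z => by
      rw [Matrix.star_eq_conjTranspose, Matrix.diagonal_conjTranspose]; rfl
    have hdiag : ∀ z : A, Matrix.diagonal (fun _ : Fin (2 ^ k) ⊕ Fin (2 ^ k) => z) =
        Matrix.fromBlocks (Matrix.diagonal fun _ => z) 0 0 (Matrix.diagonal fun _ => z) := fun z => by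
      rw [Matrix.fromBlocks_diagonal]; congr 1; ext i; cases i <;> rfl
    have key : ∀ W : Matrix (Fin (2 ^ k) ⊕ Fin (2 ^ k)) (Fin (2 ^ k) ⊕ Fin (2 ^ k)) A, 
        W = Matrix.fromBlocks (Matrix.diagonal fun _ => y) ((q : ℂ)⁻¹ • V) (-(star V))
          (Matrix.diagonal fun _ => star y) →
        W * star W = Matrix.diagonal (fun _ => sOdd x (k + 1 + 1)) ∧
        star W * W = Matrix.diagonal (fun _ => sOdd x (k + 1 + 1)) := by
      rintro W rfl
      have hsW : star (Matrix.fromBlocks (Matrix.diagonal fun _ => y) ((q : ℂ)⁻¹ • V) (-(star V))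
          (Matrix.diagonal fun _ => star y)) = 
          Matrix.fromBlocks (Matrix.diagonal fun _ => star y) (-V) ((q : ℂ)⁻¹ • star V)
          (Matrix.diagonal fun _ => y) := by
        rw [Matrix.star_eq_conjTranspose, Matrix.fromBlocks_conjTranspose]
        simp only [← Matrix.star_eq_conjTranspose, d, hst, star_neg, star_star]
      rw [hsW, hdiag, Matrix.fromBlocks_multiply, Matrix.fromBlocks_multiply]
      constructor <;> congr 1
      · rw [Matrix.smul_mul, Matrix.mul_smul, ia, Matrix.diagonal_mul_diagonal, smul_smul,
          ← Matrix.diagonal_smul, Matrix.diagonal_add]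
        exact congrArg Matrix.diagonal (funext fun _ => h3''.trans hs.symm)
      · rw [Matrix.smul_mul, m1, inv_smul_smul₀ hqc]; simp
      · rw [Matrix.mul_smul, Matrix.neg_mul, m4]; simp
      · rw [neg_mul_neg, ib, Matrix.diagonal_mul_diagonal, Matrix.diagonal_add]; rfl
      · rw [neg_mul_neg, ia, Matrix.diagonal_mul_diagonal, Matrix.diagonal_add, hs]
        exact congrArg Matrix.diagonal (funext fun _ => add_comm _ _)
      · rw [Matrix.mul_smul, Matrix.neg_mul, m3]; simp
      · rw [Matrix.smul_mul, m2, inv_smul_smul₀ hqc]; simp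
      · rw [Matrix.smul_mul, Matrix.mul_smul, ib, Matrix.diagonal_mul_diagonal, smul_smul,
          ← Matrix.diagonal_smul, Matrix.diagonal_add]
        exact congrArg Matrix.diagonal (funext fun _ => by
          rw [hs, ← h3'']; exact add_comm _ _)
    obtain ⟨k1, k2⟩ := key _ rfl
    simp only [vMat, ← hV, ← hy, Matrix.smul_one_eq_diagonal, Matrix.reindex_apply,
      Matrix.star_eq_conjTranspose, Matrix.conjTranspose_submatrix, Matrix.submatrix_mul_equiv] at *
    rw [k1, k2]
    simp only [Matrix.submatrix_diagonal_equiv, Function.comp_def, and_self]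

/-- If `x₁, …, x_{n+1}` satisfy the `S^{2n+1}_q` relations, then the matrix `V_{(2n+1)}`
is unitary. -/
theorem vMat_unitary {A : Type*} [Ring A] [Algebra ℂ A] [StarRing A] [StarModule ℂ A]
    (q : ℝ) (hq : q ≠ 0) (n : ℕ) (hn : 1 ≤ n) (x : ℕ → A)
    (hrel : OddSphereRel q n x) :
    vMat q x n * star (vMat q x n) = 1 ∧ star (vMat q x n) * vMat q x n = 1 := by
  have h := vMat_radius q hq n x hrel n le_rfl
  rw [hrel.2.2.2, Matrix.diagonal_one] at h
  exact h
end

section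
/- Let q ∈ ℝ with |q| > 1 and n ≥ 1. On H = ℓ²(ℤ × ℕⁿ) let D be the (unbounded) self-adjoint diagonal operator D e_{(k₀,k)} = k₀ e_{(k₀,k)} with its natural domain dom D = {v ∈ H : Σ k₀² |v_{(k₀,k)}|² < ∞}, and let X₁, …, X_{n+1} be the bounded operators of the representation Ψ of S^{2n+1}_q: X₁ e_{(k₀,k)} = q^{−(k₁+⋯+k_n)} e_{(k₀+1,k)} and X_i e_{(k₀,k)} = (1 − q^{−2k_{i−1}})^{1/2} q^{−(k_i+⋯+k_n)} e_{(k₀,k−δ_{i−1})} for i = 2, …, n+1. Then: (a) each X_i and X_i* maps dom D into dom D; (b) for all v ∈ dom D, D X₁ v − X₁ D v = X₁ v and D X_i v − X_i D v = 0 for i = 2, …, n+1 (so [D, Ψ(a)] extends to a bounded operator for every a in the algebra generated by the X_i); (c) for n ≥ 1, D does not have compact resolvent, i.e. (D + i)⁻¹ is not a compact operator. -/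
/-- The standard orthonormal basis vector of `ℓ²(ℤ × ℕⁿ)` at `(k₀, k)`. -/
noncomputable def eVecZ (n : ℕ) (p : ℤ × (Fin n → ℕ)) :
    lp (fun _ : ℤ × (Fin n → ℕ) => ℂ) 2 :=
  lp.single 2 p 1

/-- Membership in the natural domain of the unbounded operator
`D e_{(k₀,k)} = k₀ e_{(k₀,k)}` on `ℓ²(ℤ × ℕⁿ)`:  `Σ k₀² |v_{(k₀,k)}|² < ∞`. -/
def InDomD {n : ℕ} (v : lp (fun _ : ℤ × (Fin n → ℕ) => ℂ) 2) : Prop :=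
  Memℓp (fun p : ℤ × (Fin n → ℕ) => (p.1 : ℂ) * v p) 2

theorem aux_coord {n : ℕ}
    (T : lp (fun _ : ℤ × (Fin n → ℕ) => ℂ) 2 →L[ℂ] lp (fun _ : ℤ × (Fin n → ℕ) => ℂ) 2)
    (p r : ℤ × (Fin n → ℕ)) (c : ℝ) (h : star T (eVecZ n p) = (c : ℂ) • eVecZ n r)
    (v : lp (fun _ : ℤ × (Fin n → ℕ) => ℂ) 2) : (T v) p = (c : ℂ) * v r := by
  have e : ∀ (s) (w : lp (fun _ : ℤ × (Fin n → ℕ) => ℂ) 2), inner ℂ (eVecZ n s) w = w s := by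
    intro s w
    unfold eVecZ
    rw [lp.inner_single_left]
    simp
  rw [← e p, ← e r, ← ContinuousLinearMap.adjoint_inner_left,
    ← ContinuousLinearMap.star_eq_adjoint, h, inner_smul_left]
  simp

theorem aux_key {n : ℕ}
    (T : lp (fun _ : ℤ × (Fin n → ℕ) => ℂ) 2 →L[ℂ] lp (fun _ : ℤ × (Fin n → ℕ) => ℂ) 2)
    (d : ℤ) (h : ∀ p : ℤ × (Fin n → ℕ), ∃ (c : ℝ) (k : Fin n → ℕ),
      star T (eVecZ n p) = (c : ℂ) • eVecZ n (p.1 - d, k))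
    (v w : lp (fun _ : ℤ × (Fin n → ℕ) => ℂ) 2)
    (hw : ∀ p : ℤ × (Fin n → ℕ), w p = (p.1 : ℂ) * v p) (p : ℤ × (Fin n → ℕ)) :
    (p.1 : ℂ) * (T v) p = (T w + (d : ℂ) • T v) p := by
  obtain ⟨c, k, hc⟩ := h p
  have h1 := aux_coord T p _ c hc v
  have h2 := aux_coord T p _ c hc w
  have h3 : (T w + (d : ℂ) • T v) p = (T w) p + (d : ℂ) * (T v) p := rfl
  rw [h3, h1, h2, hw]
  push_cast
  ring

theorem aux_dom {n : ℕ}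
    (T : lp (fun _ : ℤ × (Fin n → ℕ) => ℂ) 2 →L[ℂ] lp (fun _ : ℤ × (Fin n → ℕ) => ℂ) 2)
    (d : ℤ) (h : ∀ p : ℤ × (Fin n → ℕ), ∃ (c : ℝ) (k : Fin n → ℕ),
      star T (eVecZ n p) = (c : ℂ) • eVecZ n (p.1 - d, k))
    (v : lp (fun _ : ℤ × (Fin n → ℕ) => ℂ) 2) (hv : InDomD v) : InDomD (T v) := by
  have := aux_key T d h v ⟨_, hv⟩ (fun p => rfl)
  unfold InDomD
  rw [funext this]
  exact lp.memℓp _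

theorem aux_comm {n : ℕ}
    (T : lp (fun _ : ℤ × (Fin n → ℕ) => ℂ) 2 →L[ℂ] lp (fun _ : ℤ × (Fin n → ℕ) => ℂ) 2)
    (d : ℤ) (h : ∀ p : ℤ × (Fin n → ℕ), ∃ (c : ℝ) (k : Fin n → ℕ),
      star T (eVecZ n p) = (c : ℂ) • eVecZ n (p.1 - d, k))
    (D : lp (fun _ : ℤ × (Fin n → ℕ) => ℂ) 2 → lp (fun _ : ℤ × (Fin n → ℕ) => ℂ) 2)
    (hD : ∀ v, InDomD v → ∀ p : ℤ × (Fin n → ℕ), (D v) p = (p.1 : ℂ) * v p)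
    (v : lp (fun _ : ℤ × (Fin n → ℕ) => ℂ) 2) (hv : InDomD v) :
    D (T v) - T (D v) = (d : ℂ) • T v := by
  rw [sub_eq_iff_eq_add']
  apply lp.ext
  funext p
  rw [hD _ (aux_dom T d h v hv), aux_key T d h v (D v) (hD v hv)]

theorem aux_compact {n : ℕ} (hn : 1 ≤ n)
    (D : lp (fun _ : ℤ × (Fin n → ℕ) => ℂ) 2 → lp (fun _ : ℤ × (Fin n → ℕ) => ℂ) 2)
    (hD : ∀ v, InDomD v → ∀ p : ℤ × (Fin n → ℕ), (D v) p = (p.1 : ℂ) * v p)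
    (R : lp (fun _ : ℤ × (Fin n → ℕ) => ℂ) 2 →L[ℂ] lp (fun _ : ℤ × (Fin n → ℕ) => ℂ) 2)
    (hR : ∀ v, InDomD v → R (D v + Complex.I • v) = v) : ¬ IsCompactOperator ⇑R := by
  intro hc
  let P : ℕ → ℤ × (Fin n → ℕ) := fun m => (0, fun _ => m)
  have hP : Function.Injective P := by
    intro a b hab
    exact congrFun (Prod.ext_iff.1 hab).2 ⟨0, hn⟩
  have hz : ∀ m, ∀ p : ℤ × (Fin n → ℕ), (p.1 : ℂ) * (eVecZ n (P m)) p = 0 := by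
    intro m p
    by_cases hp : p = P m
    · subst hp; simp [P]
    · unfold eVecZ
      rw [lp.single_apply_ne _ _ _ hp, mul_zero]
  have hdom : ∀ m, InDomD (eVecZ n (P m)) := by
    intro m
    unfold InDomD
    rw [funext (hz m)]
    exact zero_memℓp
  have hRe : ∀ m, R (Complex.I • eVecZ n (P m)) = eVecZ n (P m) := by
    intro m
    have h0 : D (eVecZ n (P m)) = 0 := by
      apply lp.ext
      funext p
      rw [hD _ (hdom m), hz]
      rfl
    have := hR _ (hdom m)
    rwa [h0, zero_add] at this
  have hK := IsCompactOperator.isCompact_closure_image_closedBall (f := R.toLinearMap) hc 1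
  have hmem : ∀ m, eVecZ n (P m) ∈ closure (R '' Metric.closedBall 0 1) := by
    intro m
    apply subset_closure
    refine ⟨_, ?_, hRe m⟩
    rw [mem_closedBall_zero_iff, norm_smul]
    simp [eVecZ, lp.norm_single]
  obtain ⟨a, _, φ, hφ, hlim⟩ := hK.tendsto_subseq hmem
  have hcs := hlim.cauchySeq
  rw [Metric.cauchySeq_iff] at hcs
  obtain ⟨N, hN⟩ := hcs 1 one_pos
  have h1 := hN N le_rfl (N + 1) (Nat.le_succ _)
  have hne : P (φ N) ≠ P (φ (N + 1)) := fun h => by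
    have := hφ.injective (hP h)
    omega
  rw [dist_eq_norm] at h1
  have h2 := lp.norm_apply_le_norm two_ne_zero
    (eVecZ n (P (φ N)) - eVecZ n (P (φ (N + 1)))) (P (φ N))
  have h3 : (eVecZ n (P (φ N)) - eVecZ n (P (φ (N + 1)))) (P (φ N)) = 1 := by
    rw [lp.coeFn_sub, Pi.sub_apply]
    unfold eVecZ
    rw [lp.single_apply_ne _ _ _ hne, lp.single_apply_self, sub_zero]
  rw [h3, norm_one] at h2
  exact absurd h1 (not_lt.2 h2)

/-- The unbounded operator `D = λ⁻¹ d/dλ` of the odd unbounded Fredholm module:  the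
generators preserve its domain, `[D, X₁] = X₁` and `[D, Xᵢ] = 0` for `i ≥ 2` on the
domain (so all commutators with the algebra are bounded), but `D` does not have compact
resolvent. -/
theorem unbounded_Fredholm_module_D (q : ℝ) (hq : 1 < |q|) (n : ℕ) (hn : 1 ≤ n)
    (X : ℕ → (lp (fun _ : ℤ × (Fin n → ℕ) => ℂ) 2 →L[ℂ] lp (fun _ : ℤ × (Fin n → ℕ) => ℂ) 2))
    (hX1 : ∀ (k₀ : ℤ) (k : Fin n → ℕ),
      X 1 (eVecZ n (k₀, k)) = (((q ^ (∑ j, k j))⁻¹ : ℝ) : ℂ) • eVecZ n (k₀ + 1, k))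
    (hX1s : ∀ (k₀ : ℤ) (k : Fin n → ℕ),
      star (X 1) (eVecZ n (k₀, k)) = (((q ^ (∑ j, k j))⁻¹ : ℝ) : ℂ) • eVecZ n (k₀ - 1, k))
    (hXi : ∀ i : Fin n, ∀ (k₀ : ℤ) (k : Fin n → ℕ),
      X ((i : ℕ) + 2) (eVecZ n (k₀, k)) =
        (((Real.sqrt (1 - (q ^ (2 * k i))⁻¹) *
          (q ^ (∑ j ∈ Finset.univ.filter fun j => i < j, k j))⁻¹ : ℝ)) : ℂ) •
          eVecZ n (k₀, Function.update k i (k i - 1)))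
    (hXis : ∀ i : Fin n, ∀ (k₀ : ℤ) (k : Fin n → ℕ),
      star (X ((i : ℕ) + 2)) (eVecZ n (k₀, k)) =
        (((Real.sqrt (1 - (q ^ (2 * (k i + 1)))⁻¹) *
          (q ^ (∑ j ∈ Finset.univ.filter fun j => i < j, k j))⁻¹ : ℝ)) : ℂ) •
          eVecZ n (k₀, Function.update k i (k i + 1)))
    (D : lp (fun _ : ℤ × (Fin n → ℕ) => ℂ) 2 → lp (fun _ : ℤ × (Fin n → ℕ) => ℂ) 2)
    (hD : ∀ v, InDomD v → ∀ p : ℤ × (Fin n → ℕ), (D v) p = (p.1 : ℂ) * v p) :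
    (∀ i : ℕ, 1 ≤ i → i ≤ n + 1 → ∀ v, InDomD v →
      InDomD (X i v) ∧ InDomD (star (X i) v)) ∧
    (∀ v, InDomD v →
      D (X 1 v) - X 1 (D v) = X 1 v ∧
      ∀ i : ℕ, 2 ≤ i → i ≤ n + 1 → D (X i v) - X i (D v) = 0) ∧
    (∀ R : lp (fun _ : ℤ × (Fin n → ℕ) => ℂ) 2 →L[ℂ] lp (fun _ : ℤ × (Fin n → ℕ) => ℂ) 2,
      (∀ v, InDomD v → R (D v + Complex.I • v) = v) → ¬ IsCompactOperator ⇑R) := by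
  have a1 : ∀ p : ℤ × (Fin n → ℕ), ∃ (c : ℝ) (k : Fin n → ℕ),
      star (X 1) (eVecZ n p) = (c : ℂ) • eVecZ n (p.1 - 1, k) :=
    fun p => ⟨_, _, hX1s p.1 p.2⟩
  have a1s : ∀ p : ℤ × (Fin n → ℕ), ∃ (c : ℝ) (k : Fin n → ℕ),
      star (star (X 1)) (eVecZ n p) = (c : ℂ) • eVecZ n (p.1 - (-1), k) := by
    intro p
    rw [star_star, sub_neg_eq_add]
    exact ⟨_, _, hX1 p.1 p.2⟩
  have ai : ∀ i : Fin n, ∀ p : ℤ × (Fin n → ℕ), ∃ (c : ℝ) (k : Fin n → ℕ),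
      star (X ((i : ℕ) + 2)) (eVecZ n p) = (c : ℂ) • eVecZ n (p.1 - 0, k) := by
    intro i p
    rw [sub_zero]
    exact ⟨_, _, hXis i p.1 p.2⟩
  have ais : ∀ i : Fin n, ∀ p : ℤ × (Fin n → ℕ), ∃ (c : ℝ) (k : Fin n → ℕ),
      star (star (X ((i : ℕ) + 2))) (eVecZ n p) = (c : ℂ) • eVecZ n (p.1 - 0, k) := by
    intro i p
    rw [star_star, sub_zero]
    exact ⟨_, _, hXi i p.1 p.2⟩
  refine ⟨?_, ?_, fun R hR => aux_compact hn D hD R hR⟩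
  · intro i h1 h2 v hv
    by_cases hi : i = 1
    · subst hi
      exact ⟨aux_dom _ _ a1 v hv, aux_dom _ _ a1s v hv⟩
    · obtain ⟨j, rfl⟩ : ∃ j, i = j + 2 := ⟨i - 2, by omega⟩
      exact ⟨aux_dom _ _ (ai ⟨j, by omega⟩) v hv, aux_dom _ _ (ais ⟨j, by omega⟩) v hv⟩
  · intro v hv
    refine ⟨?_, ?_⟩
    · simpa using aux_comm _ _ a1 D hD v hv
    · intro i h1 h2
      obtain ⟨j, rfl⟩ : ∃ j, i = j + 2 := ⟨i - 2, by omega⟩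
      simpa using aux_comm _ _ (ai ⟨j, by omega⟩) D hD v hv
end

section
/- Let A be a unital complex *-algebra, q a nonzero real number, and x₁, …, x_{n+1} ∈ A elements satisfying the S^{2n+1}_q relations: x_i x_j = q x_j x_i for 1 ≤ i < j ≤ n+1; x_i* x_j = q x_j x_i* for i ≠ j; x_i x_i* − x_i* x_i = (1 − q⁻²) s_{i−1} for i = 1, …, n+1 (with s₀ := 0, s_i := s_{i−1} + x_i* x_i); and s_{n+1} = 1. Let V := V_{(2n+1)} be the recursively defined unitary matrix over A. Then in the tensor product algebra A ⊗ A the following identity holds: (1/2) Σ_{i,j} (V_{ij} ⊗ (V*)_{ji} − (V*)_{ij} ⊗ V_{ji}) = (1/2)(q⁻² − 1)ⁿ (x₁ ⊗ x₁* − x₁* ⊗ x₁); that is, the low-degree Chern character ch_{1/2}(V_{(2n+1)}) = (1/2) tr(V ⊗ V* − V* ⊗ V) equals (1/2)(q⁻²−1)ⁿ (x₁ ⊗ x₁* − x₁* ⊗ x₁). -/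
open scoped TensorProduct

theorem vMat_chern_aux {A : Type*} [Ring A] [Algebra ℂ A] [StarRing A] [StarModule ℂ A]
    (q : ℝ) (x : ℕ → A) (n : ℕ) :
    (∑ i : Fin (2 ^ n), ∑ j : Fin (2 ^ n),
        ((vMat q x n) i j ⊗ₜ[ℂ] (star (vMat q x n)) j i -
          (star (vMat q x n)) i j ⊗ₜ[ℂ] (vMat q x n) j i)) =
      ((((q : ℂ) ^ 2)⁻¹ - 1) ^ n) •
        (x 1 ⊗ₜ[ℂ] star (x 1) - star (x 1) ⊗ₜ[ℂ] x 1) := by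
  induction n with
  | zero => simp [vMat, Matrix.star_apply]
  | succ k ih =>
    rw [pow_succ' (((q : ℂ) ^ 2)⁻¹ - 1) k, mul_smul, ← ih]
    have key : ∀ f : Fin (2 ^ (k + 1)) → Fin (2 ^ (k + 1)) → A ⊗[ℂ] A,
        ∑ i, ∑ j, f i j = ∑ i : Fin (2 ^ k) ⊕ Fin (2 ^ k), ∑ j : Fin (2 ^ k) ⊕ Fin (2 ^ k),
          f ((finSumFinEquiv.trans (finCongr (by rw [pow_succ, mul_two]))) i)
            ((finSumFinEquiv.trans (finCongr (by rw [pow_succ, mul_two]))) j) := by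
      intro f
      rw [← Equiv.sum_comp (finSumFinEquiv.trans (finCongr (by rw [pow_succ, mul_two])) :
        Fin (2 ^ k) ⊕ Fin (2 ^ k) ≃ Fin (2 ^ (k + 1)))]
      refine Finset.sum_congr rfl fun i _ => ?_
      rw [← Equiv.sum_comp (finSumFinEquiv.trans (finCongr (by rw [pow_succ, mul_two])) :
        Fin (2 ^ k) ⊕ Fin (2 ^ k) ≃ Fin (2 ^ (k + 1)))]
    rw [key]
    rw [Fintype.sum_sum_type]
    simp_rw [Fintype.sum_sum_type]
    simp only [vMat, Matrix.star_apply, Matrix.reindex_apply, Matrix.submatrix_apply,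
      Equiv.symm_apply_apply, Matrix.fromBlocks_apply₁₁, Matrix.fromBlocks_apply₁₂,
      Matrix.fromBlocks_apply₂₁, Matrix.fromBlocks_apply₂₂, Matrix.neg_apply, Matrix.smul_apply,
      star_neg, star_star, star_smul, TensorProduct.neg_tmul, TensorProduct.tmul_neg, neg_neg,
      TensorProduct.smul_tmul, TensorProduct.tmul_smul, Finset.smul_sum]
    simp only [← Finset.sum_add_distrib]
    have hc : star ((q : ℂ)⁻¹) = (q : ℂ)⁻¹ := by simp
    simp only [hc]
    have h1 : ∀ i j : Fin (2 ^ k), star ((1 : Matrix (Fin (2 ^ k)) (Fin (2 ^ k)) A) i j) =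
        (1 : Matrix (Fin (2 ^ k)) (Fin (2 ^ k)) A) i j := by
      intro i j
      by_cases h : i = j <;> simp [Matrix.one_apply, h]
    refine Finset.sum_congr rfl fun i _ => Finset.sum_congr rfl fun j _ => ?_
    by_cases h : i = j
    · subst h
      simp [Matrix.one_apply, smul_smul]
      module
    · simp [Matrix.one_apply, h, Ne.symm h, smul_smul]
      module

/-- The low-degree Chern character of the unitary `V_{(2n+1)}`:
`ch_{1/2}(V) = ½ tr(V ⊗ V* - V* ⊗ V) = ½ (q⁻² - 1)ⁿ (x₁ ⊗ x₁* - x₁* ⊗ x₁)`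
in `A ⊗ A`. -/
theorem vMat_chern_character {A : Type*} [Ring A] [Algebra ℂ A] [StarRing A] [StarModule ℂ A]
    (q : ℝ) (hq : q ≠ 0) (n : ℕ) (hn : 1 ≤ n) (x : ℕ → A)
    (hrel : OddSphereRel q n x) :
    (2 : ℂ)⁻¹ • (∑ i : Fin (2 ^ n), ∑ j : Fin (2 ^ n),
        ((vMat q x n) i j ⊗ₜ[ℂ] (star (vMat q x n)) j i -
          (star (vMat q x n)) i j ⊗ₜ[ℂ] (vMat q x n) j i)) =
      ((2 : ℂ)⁻¹ * (((q : ℂ) ^ 2)⁻¹ - 1) ^ n) •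
        (x 1 ⊗ₜ[ℂ] star (x 1) - star (x 1) ⊗ₜ[ℂ] x 1) := by
  rw [vMat_chern_aux, mul_smul]
end
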